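/- Let d ≥ 4 be even and let P ⊆ ℝ^d be a d-dimensional simplicial reflexive polytope with exactly 3d−1 vertices. Then P splits into (d−2)/2 copies of V2 and one copy of one of the three pentagons Ṽ2, E1, E2. -/

import Mathlib

noncomputable section

/-- The standard inner product on `ℝ^d`. -/
def dotp {d : ℕ} (x y : Fin d → ℝ) : ℝ := ∑ i, x i * y i

/-- `x` is a point of the lattice `ℤ^d`. -/
def IsLP {d : ℕ} (x : Fin d → ℝ) : Prop := ∀ i, ∃ n : ℤ, x i = (n : ℝ)

/-- A lattice polytope: convex hull of finitely many lattice points. -/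
def IsLatticePolytope {d : ℕ} (P : Set (Fin d → ℝ)) : Prop :=
  ∃ V : Finset (Fin d → ℝ), (∀ v ∈ V, IsLP v) ∧ P = convexHull ℝ (V : Set (Fin d → ℝ))

/-- The dual polytope `P* = {x | ⟨x,y⟩ ≤ 1 ∀ y ∈ P}`. -/
def dualPolytope {d : ℕ} (P : Set (Fin d → ℝ)) : Set (Fin d → ℝ) :=
  {x | ∀ y ∈ P, dotp x y ≤ 1}

/-- `P` is a reflexive polytope: a (`d`-dimensional) lattice polytope with `0` in its
interior whose dual is again a lattice polytope. -/
def IsReflexive {d : ℕ} (P : Set (Fin d → ℝ)) : Prop :=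
  IsLatticePolytope P ∧ (0 : Fin d → ℝ) ∈ interior P ∧ IsLatticePolytope (dualPolytope P)

/-- `F` is a facet of `P` with (uniquely determined) outer normal `u`, normalized by
`⟨u, F⟩ = 1` (possible since `0` is in the interior of `P`). -/
def IsFacetNormal {d : ℕ} (P F : Set (Fin d → ℝ)) (u : Fin d → ℝ) : Prop :=
  F.Nonempty ∧ (∀ y ∈ P, dotp u y ≤ 1) ∧ F = {y ∈ P | dotp u y = 1} ∧
    Module.finrank ℝ (vectorSpan ℝ F) = d - 1

/-- `F` is a facet of `P`. -/
def IsFacet {d : ℕ} (P F : Set (Fin d → ℝ)) : Prop := ∃ u, IsFacetNormal P F u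

/-- `P` is simplicial: every facet has exactly `d` vertices. -/
def IsSimplicial {d : ℕ} (P : Set (Fin d → ℝ)) : Prop :=
  ∀ F, IsFacet P F → (Set.extremePoints ℝ F).ncard = d

/-- Vertices of the hexagon `V₂`. -/
def V2v : Set (Fin 2 → ℤ) := {![1,0], ![0,1], ![1,1], ![-1,0], ![0,-1], ![-1,-1]}

/-- Vertices of the pentagon `Ṽ₂`. -/
def tV2v : Set (Fin 2 → ℤ) := {![1,0], ![0,1], ![1,1], ![-1,0], ![0,-1]}

/-- Vertices of the pentagon `E₁`. -/
def E1v : Set (Fin 2 → ℤ) := {![1,0], ![-1,2], ![-1,1], ![0,-1], ![1,-1]}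

/-- Vertices of the pentagon `E₂`. -/
def E2v : Set (Fin 2 → ℤ) := {![1,0], ![0,1], ![-1,1], ![-1,-1], ![1,-1]}

/-- Vertices of the 3-polytope `Q₃`. -/
def Q3v : Set (Fin 3 → ℤ) :=
  {![1,0,0], ![-1,0,0], ![0,1,0], ![0,-1,0], ![1,1,0], ![-1,-1,0], ![0,0,1], ![0,0,-1]}

/-- Vertices of the 3-polytope `Q₃'`. -/
def Q3'v : Set (Fin 3 → ℤ) :=
  {![1,0,0], ![-1,0,0], ![0,1,0], ![0,-1,0], ![1,1,0], ![-1,-1,0], ![0,0,1], ![1,0,-1]}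

/-- Embed `ℤ²` into coordinates `o, o+1` of `ℝ^d`. -/
def embed2 (d o : ℕ) (v : Fin 2 → ℤ) : Fin d → ℝ :=
  fun i => if (i : ℕ) = o then (v 0 : ℝ) else if (i : ℕ) = o + 1 then (v 1 : ℝ) else 0

/-- Embed `ℤ³` into coordinates `0, 1, 2` of `ℝ^d`. -/
def embed3 (d : ℕ) (v : Fin 3 → ℤ) : Fin d → ℝ :=
  fun i => if (i : ℕ) = 0 then (v 0 : ℝ) else if (i : ℕ) = 1 then (v 1 : ℝ)
    else if (i : ℕ) = 2 then (v 2 : ℝ) else 0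

/-- Standard model of a polytope in `ℝ^d` that splits into a polygon with vertex set `Q`
(in coordinates `0,1`) and `(d-2)/2` copies of `V₂` (in the remaining coordinate pairs). -/
def splitModel2 (d : ℕ) (Q : Set (Fin 2 → ℤ)) : Set (Fin d → ℝ) :=
  convexHull ℝ (embed2 d 0 '' Q ∪ ⋃ j ∈ Finset.range ((d - 2) / 2), embed2 d (2 * j + 2) '' V2v)

/-- Standard model of a polytope in `ℝ^d` that splits into a 3-polytope with vertex set `Q`
(in coordinates `0,1,2`) and `(d-3)/2` copies of `V₂` (in the remaining coordinate pairs). -/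
def splitModel3 (d : ℕ) (Q : Set (Fin 3 → ℤ)) : Set (Fin d → ℝ) :=
  convexHull ℝ (embed3 d '' Q ∪ ⋃ j ∈ Finset.range ((d - 3) / 2), embed2 d (2 * j + 3) '' V2v)

/-- Standard model of a polytope in `ℝ^d` that splits into `d/2` copies of `V₂`. -/
def splitModelV2 (d : ℕ) : Set (Fin d → ℝ) :=
  convexHull ℝ (⋃ j ∈ Finset.range (d / 2), embed2 d (2 * j) '' V2v)

/-- `φ` is a unimodular transformation: a linear automorphism of `ℝ^d` mapping the lattice
`ℤ^d` onto itself. `P` splits into given polytopes iff some unimodular transformation maps `P`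
onto the corresponding standard model. -/
def Unimodular {d : ℕ} (φ : (Fin d → ℝ) ≃ₗ[ℝ] (Fin d → ℝ)) : Prop :=
  ∀ x, IsLP x ↔ IsLP (φ x)

/-- level functional of a basis: sum of coordinates -/
def lev {d : ℕ} (b : Module.Basis (Fin d) ℝ (Fin d → ℝ)) : (Fin d → ℝ) →ₗ[ℝ] ℝ :=
  ∑ i, b.coord i

structure Hyp {d : ℕ} (V : Finset (Fin d → ℝ)) : Prop where
  lat : ∀ w ∈ V, IsLP w
  tight : ∀ u : (Fin d → ℝ) →ₗ[ℝ] ℝ, (∀ w ∈ V, u w ≤ 1) →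
    Submodule.span ℝ {w | w ∈ V ∧ u w = 1} = ⊤ →
    (∀ x, IsLP x → ∃ n : ℤ, u x = n) ∧ {w | w ∈ V ∧ u w = 1}.ncard = d
  int : ∀ l : (Fin d → ℝ) →ₗ[ℝ] ℝ, l ≠ 0 → ∃ w ∈ V, l w < 0
  card : V.card + 1 = 3 * d
  zero : (0 : Fin d → ℝ) ∉ V
  ext : ∀ w ∈ V, w ∈ Set.extremePoints ℝ (convexHull ℝ (V : Set (Fin d → ℝ)))

structure IsF {d : ℕ} (V : Finset (Fin d → ℝ)) (b : Module.Basis (Fin d) ℝ (Fin d → ℝ)) : Prop where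
  mem : ∀ i, b i ∈ V
  le : ∀ w ∈ V, lev b w ≤ 1
  eq : ∀ w ∈ V, lev b w = 1 → ∃ i, w = b i
  int : ∀ x, IsLP x → ∃ n : ℤ, lev b x = n

lemma lev_apply {d : ℕ} (b : Module.Basis (Fin d) ℝ (Fin d → ℝ)) (w : Fin d → ℝ) :
    lev b w = ∑ i, b.coord i w := by
  simp [lev]

lemma coord_self {d : ℕ} (b : Module.Basis (Fin d) ℝ (Fin d → ℝ)) (i : Fin d) :
    b.coord i (b i) = 1 := by simp

lemma coord_ne {d : ℕ} (b : Module.Basis (Fin d) ℝ (Fin d → ℝ)) {i j : Fin d} (h : j ≠ i) :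
    b.coord i (b j) = 0 := by
  simp [h]

lemma lev_basis {d : ℕ} (b : Module.Basis (Fin d) ℝ (Fin d → ℝ)) (i : Fin d) :
    lev b (b i) = 1 := by
  rw [lev_apply, Finset.sum_eq_single i]
  · exact coord_self b i
  · intro j _ hj; exact coord_ne b (Ne.symm hj)
  · simp

lemma coord_ext {d : ℕ} (b : Module.Basis (Fin d) ℝ (Fin d → ℝ)) {x y : Fin d → ℝ}
    (h : ∀ i, b.coord i x = b.coord i y) : x = y := by
  apply b.repr.injective
  ext i
  exact h i

lemma isF_of {d : ℕ} {V : Finset (Fin d → ℝ)} (H : Hyp V)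
    {b : Module.Basis (Fin d) ℝ (Fin d → ℝ)}
    (hm : ∀ i, b i ∈ V) (hle : ∀ w ∈ V, lev b w ≤ 1) : IsF V b := by
  have hsub : Set.range b ⊆ {w | w ∈ V ∧ lev b w = 1} := by
    rintro _ ⟨i, rfl⟩; exact ⟨hm i, lev_basis b i⟩
  have hspan : Submodule.span ℝ {w | w ∈ V ∧ lev b w = 1} = ⊤ := by
    rw [eq_top_iff, ← b.span_eq]; exact Submodule.span_mono hsub
  obtain ⟨h1, h2⟩ := H.tight (lev b) hle hspan
  refine ⟨hm, hle, ?_, h1⟩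
  have hfin : {w | w ∈ V ∧ lev b w = 1}.Finite := V.finite_toSet.subset (fun w hw => hw.1)
  have hr : (Set.range b).ncard = d := by
    rw [← Set.image_univ, Set.ncard_image_of_injective _ b.injective, Set.ncard_univ]; simp
  have := Set.eq_of_subset_of_ncard_le hsub (by rw [h2, hr]) hfin
  intro w hw h
  have : w ∈ Set.range b := by rw [this]; exact ⟨hw, h⟩
  obtain ⟨i, hi⟩ := this
  exact ⟨i, hi.symm⟩

lemma push {d : ℕ} {V : Finset (Fin d → ℝ)} (H : Hyp V)
    (u l : (Fin d → ℝ) →ₗ[ℝ] ℝ) (hu : ∀ w ∈ V, u w ≤ 1) (hl : l ≠ 0) :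
    ∃ t : ℝ, 0 ≤ t ∧ (∀ w ∈ V, u w + t * l w ≤ 1) ∧ ∃ w ∈ V, 0 < l w ∧ u w + t * l w = 1 := by
  classical
  obtain ⟨w0, hw0, h0⟩ := H.int (-l) (by simpa using hl)
  have hne : (V.filter (fun w => 0 < l w)).Nonempty :=
    ⟨w0, by simp at h0; simp [hw0, h0]⟩
  obtain ⟨x, hx, hmin⟩ := Finset.exists_min_image _ (fun w => (1 - u w) / l w) hne
  simp only [Finset.mem_filter] at hx hmin
  have hx1 := hu x hx.1
  have ht : 0 ≤ (1 - u x) / l x := div_nonneg (by linarith) hx.2.le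
  refine ⟨(1 - u x) / l x, ht, ?_, x, hx.1, hx.2, ?_⟩
  · intro w hw
    by_cases h : 0 < l w
    · have := hmin w ⟨hw, h⟩
      rw [le_div_iff₀ h] at this
      linarith
    · push Not at h
      have := mul_nonpos_of_nonneg_of_nonpos ht h
      have := hu w hw
      linarith
  · have := hx.2.ne'
    field_simp
    ring

lemma exists_isF {d : ℕ} {V : Finset (Fin d → ℝ)} (H : Hyp V) :
    ∃ b, IsF V b := by
  classical
  -- a feasible functional with spanning tight set
  have key : ∀ n : ℕ, n ≤ d → ∃ u : (Fin d → ℝ) →ₗ[ℝ] ℝ, (∀ w ∈ V, u w ≤ 1) ∧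
      n ≤ Module.finrank ℝ (Submodule.span ℝ {w | w ∈ V ∧ u w = 1}) := by
    intro n
    induction n with
    | zero => intro _; exact ⟨0, by simp, by simp⟩
    | succ n ih =>
      intro hn
      obtain ⟨u, hu, hr⟩ := ih (by omega)
      by_cases h : n + 1 ≤ Module.finrank ℝ (Submodule.span ℝ {w | w ∈ V ∧ u w = 1})
      · exact ⟨u, hu, h⟩
      have hlt : Submodule.span ℝ {w | w ∈ V ∧ u w = 1} < ⊤ := by
        rw [lt_top_iff_ne_top]
        intro h'
        rw [h', finrank_top] at h
        simp at h; omega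
      obtain ⟨l, hl, hle⟩ := Submodule.exists_le_ker_of_lt_top _ hlt
      obtain ⟨t, ht, h1, x, hx, hx1, hx2⟩ := push H u l hu hl
      refine ⟨u + t • l, by simpa using h1, ?_⟩
      have hsub : Submodule.span ℝ {w | w ∈ V ∧ u w = 1} <
          Submodule.span ℝ {w | w ∈ V ∧ (u + t • l) w = 1} := by
        refine lt_of_le_of_ne ?_ ?_
        · rw [Submodule.span_le]
          intro w hw
          apply Submodule.subset_span
          have : w ∈ LinearMap.ker l := hle (Submodule.subset_span hw)
          refine ⟨hw.1, ?_⟩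
          simp [LinearMap.mem_ker.1 this, hw.2]
        · intro h'
          have : x ∈ Submodule.span ℝ {w | w ∈ V ∧ (u + t • l) w = 1} :=
            Submodule.subset_span ⟨hx, by simpa using hx2⟩
          rw [← h'] at this
          have := hle this
          rw [LinearMap.mem_ker] at this
          linarith
      have := Submodule.finrank_lt_finrank_of_lt hsub
      omega
  obtain ⟨u, hu, hr⟩ := key d le_rfl
  have hspan : Submodule.span ℝ {w | w ∈ V ∧ u w = 1} = ⊤ := by
    apply Submodule.eq_top_of_finrank_eq
    have := Submodule.finrank_le (Submodule.span ℝ {w | w ∈ V ∧ u w = 1})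
    simp at this ⊢
    omega
  obtain ⟨h1, h2⟩ := H.tight u hu hspan
  have hset : ({w | w ∈ V ∧ u w = 1} : Set (Fin d → ℝ)) = ↑(V.filter (fun w => u w = 1)) := by
    ext; simp
  rw [hset, Set.ncard_coe_finset] at h2
  let e := (Finset.equivFinOfCardEq h2).symm
  let f : Fin d → (Fin d → ℝ) := fun i => (e i : Fin d → ℝ)
  have hf : ∀ i, f i ∈ V ∧ u (f i) = 1 := fun i => by
    have := Finset.mem_filter.1 (e i).2; exact this
  have hrange : Set.range f = {w | w ∈ V ∧ u w = 1} := by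
    ext w; constructor
    · rintro ⟨i, rfl⟩; exact hf i
    · intro hw
      refine ⟨e.symm ⟨w, by simpa using hw⟩, by simp [f]⟩
  let b := basisOfTopLeSpanOfCardEqFinrank f (by rw [hrange, hspan]) (by simp)
  have hb : ∀ i, b i = f i := fun i => by simp [b]
  have hlev : lev b = u := by
    apply b.ext
    intro i
    rw [lev_basis, hb, (hf i).2]
  exact ⟨b, isF_of H (fun i => by rw [hb]; exact (hf i).1) (by rw [hlev]; exact hu)⟩

lemma exists_nbr {d : ℕ} {V : Finset (Fin d → ℝ)} (H : Hyp V)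
    {b : Module.Basis (Fin d) ℝ (Fin d → ℝ)} (hb : IsF V b) (i : Fin d) :
    ∃ (b' : Module.Basis (Fin d) ℝ (Fin d → ℝ)) (k : ℤ), IsF V b' ∧ 1 ≤ k ∧
      (∀ j, j ≠ i → b' j = b j) ∧ b.coord i (b' i) < 0 ∧
      (∀ w, lev b' w = lev b w - k * b.coord i w) := by
  classical
  obtain ⟨t, ht, h1, x, hx, hx1, hx2⟩ := push H (lev b) (-b.coord i) hb.le
    (by intro h; have := congrArg (fun l => l (b i)) h; simp at this)
  have hx1' : b.coord i x < 0 := by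
    have : (-b.coord i) x = - b.coord i x := rfl
    linarith
  let f : Fin d → (Fin d → ℝ) := Function.update b i x
  have hfi : f i = x := by simp [f]
  have hfj : ∀ j, j ≠ i → f j = b j := fun j hj => by simp [f, hj]
  have hspan : ⊤ ≤ Submodule.span ℝ (Set.range f) := by
    rw [← b.span_eq, Submodule.span_le]
    rintro _ ⟨j, rfl⟩
    by_cases hj : j = i
    · subst hj
      have hsum : x = b.coord j x • b j + ∑ l ∈ Finset.univ.erase j, b.coord l x • b l := by
        rw [Finset.add_sum_erase _ (fun l => b.coord l x • b l) (Finset.mem_univ j)]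
        exact (b.sum_repr x).symm
      have : b j = (b.coord j x)⁻¹ • (x - ∑ l ∈ Finset.univ.erase j, b.coord l x • b l) := by
        rw [eq_inv_smul_iff₀ hx1'.ne]
        exact eq_sub_of_add_eq hsum.symm
      rw [this]
      apply Submodule.smul_mem
      apply Submodule.sub_mem
      · exact Submodule.subset_span ⟨j, hfi⟩
      · apply Submodule.sum_mem
        intro l hl
        apply Submodule.smul_mem
        exact Submodule.subset_span ⟨l, hfj l (Finset.ne_of_mem_erase hl)⟩
    · exact Submodule.subset_span ⟨j, hfj j hj⟩
  let b' := basisOfTopLeSpanOfCardEqFinrank f hspan (by simp)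
  have hb' : ∀ i, b' i = f i := fun i => by simp [b']
  have hlev : lev b' = lev b - t • b.coord i := by
    apply b'.ext
    intro j
    rw [lev_basis, hb']
    by_cases hj : j = i
    · subst hj
      rw [hfi]
      simp at hx2 ⊢; linarith
    · rw [hfj j hj]
      have := coord_ne b hj
      rw [LinearMap.sub_apply, LinearMap.smul_apply, this, lev_basis]; simp
  have hF : IsF V b' := by
    apply isF_of H
    · intro j
      rw [hb']
      by_cases hj : j = i
      · subst hj; rw [hfi]; exact hx
      · rw [hfj j hj]; exact hb.mem j
    · intro w hw
      have := h1 w hw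
      rw [hlev]
      simp at this ⊢; linarith
  obtain ⟨n1, hn1⟩ := hb.int (b i) (H.lat _ (hb.mem i))
  obtain ⟨n2, hn2⟩ := hF.int (b i) (H.lat _ (hb.mem i))
  have hk : t = ((n1 - n2 : ℤ) : ℝ) := by
    rw [hlev] at hn2
    have := coord_self b i
    simp only [LinearMap.sub_apply, LinearMap.smul_apply, this, smul_eq_mul, mul_one] at hn2
    push_cast
    linarith
  have ht0 : t ≠ 0 := by
    intro h
    rw [h] at hx2
    obtain ⟨j, hj⟩ := hb.eq x hx (by simpa using hx2)
    rw [hj] at hx1'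
    by_cases hji : j = i
    · subst hji; rw [coord_self] at hx1'; linarith
    · rw [coord_ne b hji] at hx1'; linarith
  refine ⟨b', n1 - n2, hF, ?_, fun j hj => by rw [hb', hfj j hj], by rw [hb', hfi]; exact hx1', ?_⟩
  · have : 0 < ((n1 - n2 : ℤ) : ℝ) := by rw [← hk]; exact lt_of_le_of_ne ht (Ne.symm ht0)
    have : 0 < n1 - n2 := by exact_mod_cast this
    omega
  · intro w
    rw [hlev, ← hk]; simp

open Classical in
/-- neighbouring facet -/
def nbr {d : ℕ} (V : Finset (Fin d → ℝ)) (b : Module.Basis (Fin d) ℝ (Fin d → ℝ)) (i : Fin d) :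
    Module.Basis (Fin d) ℝ (Fin d → ℝ) :=
  if h : Hyp V ∧ IsF V b then (exists_nbr h.1 h.2 i).choose else b

open Classical in
def kk {d : ℕ} (V : Finset (Fin d → ℝ)) (b : Module.Basis (Fin d) ℝ (Fin d → ℝ)) (i : Fin d) : ℤ :=
  if h : Hyp V ∧ IsF V b then (exists_nbr h.1 h.2 i).choose_spec.choose else 0

/-- new vertex of neighbouring facet -/
def nv {d : ℕ} (V : Finset (Fin d → ℝ)) (b : Module.Basis (Fin d) ℝ (Fin d → ℝ)) (i : Fin d) :
    Fin d → ℝ := nbr V b i i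

/-- facet of a polytope satisfying the hypotheses -/
structure FF {d : ℕ} (V : Finset (Fin d → ℝ)) (b : Module.Basis (Fin d) ℝ (Fin d → ℝ)) : Prop where
  H : Hyp V
  F : IsF V b

section basic
variable {d : ℕ} {V : Finset (Fin d → ℝ)} {b : Module.Basis (Fin d) ℝ (Fin d → ℝ)}

lemma nbr_spec (hb : FF V b) (i : Fin d) : IsF V (nbr V b i) ∧ 1 ≤ kk V b i ∧
      (∀ j, j ≠ i → nbr V b i j = b j) ∧ b.coord i (nv V b i) < 0 ∧
      (∀ w, lev (nbr V b i) w = lev b w - kk V b i * b.coord i w) := by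
  have h : Hyp V ∧ IsF V b := ⟨hb.H, hb.F⟩
  have := (exists_nbr h.1 h.2 i).choose_spec.choose_spec
  unfold nv nbr kk
  rw [dif_pos h, dif_pos h]
  exact this

lemma nbr_FF (hb : FF V b) (i : Fin d) : FF V (nbr V b i) := ⟨hb.H, (nbr_spec hb i).1⟩

lemma kk_pos (hb : FF V b) (i : Fin d) : 1 ≤ kk V b i := (nbr_spec hb i).2.1

lemma kk_posR (hb : FF V b) (i : Fin d) : (1 : ℝ) ≤ kk V b i := by exact_mod_cast kk_pos hb i

lemma nbr_ne (hb : FF V b) {i j : Fin d} (h : j ≠ i) : nbr V b i j = b j :=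
  (nbr_spec hb i).2.2.1 j h

lemma nv_neg (hb : FF V b) (i : Fin d) : b.coord i (nv V b i) < 0 := (nbr_spec hb i).2.2.2.1

lemma lev_nbr (hb : FF V b) (i : Fin d) (w : Fin d → ℝ) :
    lev (nbr V b i) w = lev b w - kk V b i * b.coord i w := (nbr_spec hb i).2.2.2.2 w

lemma nv_mem (hb : FF V b) (i : Fin d) : nv V b i ∈ V := (nbr_FF hb i).F.mem i

lemma lev_nv (hb : FF V b) (i : Fin d) :
    lev b (nv V b i) - kk V b i * b.coord i (nv V b i) = 1 := by
  rw [← lev_nbr hb]; exact lev_basis _ i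

lemma nbr_coord_self (hb : FF V b) (i : Fin d) (w : Fin d → ℝ) :
    (nbr V b i).coord i w = b.coord i w / b.coord i (nv V b i) := by
  have h := nv_neg hb i
  have : (nbr V b i).coord i = (b.coord i (nv V b i))⁻¹ • b.coord i := by
    apply (nbr V b i).ext
    intro j
    by_cases hj : j = i
    · subst hj
      rw [coord_self, LinearMap.smul_apply, smul_eq_mul]
      exact (inv_mul_cancel₀ h.ne).symm
    · rw [coord_ne _ hj, nbr_ne hb hj, LinearMap.smul_apply, coord_ne _ hj]; simp
  rw [this, LinearMap.smul_apply, smul_eq_mul]; ring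

lemma nbr_coord_ne (hb : FF V b) {i l : Fin d} (hl : l ≠ i) (w : Fin d → ℝ) :
    (nbr V b i).coord l w =
      b.coord l w - b.coord l (nv V b i) * (b.coord i w / b.coord i (nv V b i)) := by
  have h := nv_neg hb i
  have : (nbr V b i).coord l =
      b.coord l - (b.coord l (nv V b i) / b.coord i (nv V b i)) • b.coord i := by
    apply (nbr V b i).ext
    intro j
    rw [LinearMap.sub_apply, LinearMap.smul_apply, smul_eq_mul]
    by_cases hj : j = i
    · subst hj
      rw [coord_ne _ (Ne.symm hl)]
      have : nbr V b j j = nv V b j := rfl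
      rw [this, div_mul_cancel₀ _ h.ne]; simp
    · rw [nbr_ne hb hj, coord_ne b hj]
      by_cases hjl : j = l
      · subst hjl
        have : (nbr V b i) j = b j := nbr_ne hb hj
        rw [← this, coord_self, this, coord_self]; simp
      · have : (nbr V b i) j = b j := nbr_ne hb hj
        rw [← this, coord_ne _ hjl, this, coord_ne _ hjl]; simp
  rw [this, LinearMap.sub_apply, LinearMap.smul_apply, smul_eq_mul]; ring

/-- integrality -/
lemma kk_int (hb : FF V b) (i : Fin d) {x : Fin d → ℝ} (hx : IsLP x) :
    ∃ n : ℤ, kk V b i * b.coord i x = n := by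
  obtain ⟨n1, h1⟩ := hb.F.int x hx
  obtain ⟨n2, h2⟩ := (nbr_FF hb i).F.int x hx
  rw [lev_nbr hb, h1] at h2
  exact ⟨n1 - n2, by push_cast; linarith⟩

lemma lev_int (hb : FF V b) {x : Fin d → ℝ} (hx : x ∈ V) : ∃ n : ℤ, lev b x = n :=
  hb.F.int x (hb.H.lat x hx)

lemma nbr_le (hb : FF V b) (i : Fin d) {w : Fin d → ℝ} (hw : w ∈ V) :
    lev b w - kk V b i * b.coord i w ≤ 1 := by
  rw [← lev_nbr hb]; exact (nbr_FF hb i).F.le w hw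

lemma nbr_eq (hb : FF V b) (i : Fin d) {w : Fin d → ℝ} (hw : w ∈ V)
    (h : lev b w - kk V b i * b.coord i w = 1) : w = nv V b i ∨ ∃ j, j ≠ i ∧ w = b j := by
  rw [← lev_nbr hb] at h
  obtain ⟨j, hj⟩ := (nbr_FF hb i).F.eq w hw h
  by_cases hji : j = i
  · subst hji; exact Or.inl hj
  · right; exact ⟨j, hji, by rw [hj, nbr_ne hb hji]⟩

/-- a vertex of the neighbour with level less than 1 is the new vertex -/
lemma nbr_eq' (hb : FF V b) (i : Fin d) {w : Fin d → ℝ} (hw : w ∈ V)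
    (h : lev b w - kk V b i * b.coord i w = 1) (h1 : lev b w < 1) : w = nv V b i := by
  rcases nbr_eq hb i hw h with h | ⟨j, _, rfl⟩
  · exact h
  · rw [lev_basis] at h1; linarith

lemma lev_zero_neg (hb : FF V b) (i : Fin d) {w : Fin d → ℝ} (hw : w ∈ V) (h0 : lev b w = 0)
    (hn : b.coord i w < 0) : w = nv V b i ∧ kk V b i * b.coord i w = -1 := by
  have h1 := nbr_le hb i hw
  obtain ⟨n, hn'⟩ := kk_int hb i (hb.H.lat w hw)
  have hk := kk_posR hb i
  have h2 : (kk V b i : ℝ) * b.coord i w < 0 := mul_neg_of_pos_of_neg (by linarith) hn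
  have : n = -1 := by
    rw [hn'] at h2 h1
    have h3 : n < 0 := by exact_mod_cast h2
    have h4 : (-1 : ℝ) ≤ n := by linarith
    have : -1 ≤ n := by exact_mod_cast h4
    omega
  have h3 : kk V b i * b.coord i w = -1 := by rw [hn', this]; simp
  exact ⟨nbr_eq' hb i hw (by rw [h3, h0]; ring) (by rw [h0]; norm_num), h3⟩

lemma lev_zero_exists (hb : FF V b) {w : Fin d → ℝ} (hw : w ∈ V) (h0 : lev b w = 0) :
    ∃ i, b.coord i w < 0 := by
  by_contra hc
  push Not at hc
  rw [lev_apply] at h0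
  rw [Finset.sum_eq_zero_iff_of_nonneg (fun i _ => hc i)] at h0
  apply hb.H.zero
  have : w = 0 := coord_ext b (fun i => by rw [h0 i (Finset.mem_univ i)]; simp)
  rw [← this]; exact hw

end basic

section counting
variable {d : ℕ} {V : Finset (Fin d → ℝ)} {b : Module.Basis (Fin d) ℝ (Fin d → ℝ)}

open Classical in
/-- vertices of level zero -/
def Zf (V : Finset (Fin d → ℝ)) (b : Module.Basis (Fin d) ℝ (Fin d → ℝ)) : Finset (Fin d → ℝ) :=
  V.filter (fun w => lev b w = 0)

lemma mem_Zf {w : Fin d → ℝ} : w ∈ Zf V b ↔ w ∈ V ∧ lev b w = 0 := by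
  classical
  simp [Zf]

/-- the set of index heads -/
lemma exists_heads (hb : FF V b) : ∃ I : Finset (Fin d), I.card = (Zf V b).card ∧
    (∀ i ∈ I, nv V b i ∈ Zf V b) ∧
    (∀ w ∈ Zf V b, ∃ i ∈ I, w = nv V b i) ∧
    (∀ i ∈ I, ∀ j, j ≠ i → b.coord j (nv V b i) < 0 → j ∉ I) := by
  classical
  have h : ∀ w : Fin d → ℝ, ∃ i : Fin d, w ∈ Zf V b → b.coord i w < 0 := by
    intro w
    by_cases hw : w ∈ Zf V b
    · obtain ⟨i, hi⟩ := lev_zero_exists hb (mem_Zf.1 hw).1 (mem_Zf.1 hw).2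
      exact ⟨i, fun _ => hi⟩
    · by_cases hd : Nonempty (Fin d)
      · exact ⟨hd.some, fun h => absurd h hw⟩
      · exfalso
        rw [not_nonempty_iff] at hd
        have : w = 0 := by ext i; exact (hd.false i).elim
        have hc := hb.H.card
        have : d = 0 := by
          by_contra h0
          exact hd.false ⟨0, by omega⟩
        omega
  choose f hf using h
  have hnv : ∀ w ∈ Zf V b, w = nv V b (f w) := fun w hw =>
    (lev_zero_neg hb (f w) (mem_Zf.1 hw).1 (mem_Zf.1 hw).2 (hf w hw)).1
  refine ⟨(Zf V b).image f, ?_, ?_, ?_, ?_⟩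
  · apply Finset.card_image_of_injOn
    intro w hw w' hw' h
    rw [hnv w hw, hnv w' hw', h]
  · intro i hi
    obtain ⟨w, hw, rfl⟩ := Finset.mem_image.1 hi
    rw [← hnv w hw]; exact hw
  · intro w hw
    exact ⟨f w, Finset.mem_image_of_mem f hw, hnv w hw⟩
  · intro i hi j hj hn hjI
    obtain ⟨w, hw, rfl⟩ := Finset.mem_image.1 hi
    obtain ⟨w', hw', rfl⟩ := Finset.mem_image.1 hjI
    rw [← hnv w hw] at hn
    have := (lev_zero_neg hb (f w') (mem_Zf.1 hw).1 (mem_Zf.1 hw).2 hn).1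
    rw [← hnv w' hw'] at this
    exact hj (by rw [this])

lemma Zf_card_le (hb : FF V b) : (Zf V b).card ≤ d := by
  obtain ⟨I, h, _⟩ := exists_heads hb
  rw [← h]; simpa using Finset.card_le_univ I

lemma Zf_full (hb : FF V b) (hz : (Zf V b).card = d) :
    (∀ i, lev b (nv V b i) = 0) ∧ (∀ i j, j ≠ i → 0 ≤ b.coord j (nv V b i)) ∧
    (∀ w ∈ V, lev b w = 0 → ∃ i, w = nv V b i) := by
  obtain ⟨I, h, h1, h2, h3⟩ := exists_heads hb
  have hI : I = Finset.univ := Finset.eq_univ_of_card I (by rw [h, hz]; simp)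
  subst hI
  refine ⟨fun i => (mem_Zf.1 (h1 i (Finset.mem_univ i))).2, ?_, ?_⟩
  · intro i j hj
    by_contra hc
    push Not at hc
    exact h3 i (Finset.mem_univ i) j hj hc (Finset.mem_univ j)
  · intro w hw h0
    obtain ⟨i, _, hi⟩ := h2 w (mem_Zf.2 ⟨hw, h0⟩)
    exact ⟨i, hi⟩

lemma Zf_almost (hb : FF V b) (hz : d ≤ (Zf V b).card + 1) {i0 : Fin d}
    (hi0 : lev b (nv V b i0) ≠ 0) :
    (∀ i, i ≠ i0 → lev b (nv V b i) = 0) ∧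
    (∀ i, i ≠ i0 → ∀ j, j ≠ i → 0 ≤ b.coord j (nv V b i)) ∧
    (∀ w ∈ V, lev b w = 0 → ∃ i, i ≠ i0 ∧ w = nv V b i) := by
  classical
  obtain ⟨I, h, h1, h2, h3⟩ := exists_heads hb
  have hi0I : i0 ∉ I := fun hi => hi0 (mem_Zf.1 (h1 i0 hi)).2
  have hI : I = Finset.univ.erase i0 := by
    apply Finset.eq_of_subset_of_card_le
    · intro i hi
      rw [Finset.mem_erase]
      exact ⟨fun h => hi0I (h ▸ hi), Finset.mem_univ i⟩
    · rw [Finset.card_erase_of_mem (Finset.mem_univ _), Finset.card_univ, Fintype.card_fin]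
      omega
  have hmem : ∀ i, i ≠ i0 → i ∈ I := fun i hi => by rw [hI]; simp [hi]
  have hlev : ∀ i, i ≠ i0 → lev b (nv V b i) = 0 := fun i hi => (mem_Zf.1 (h1 i (hmem i hi))).2
  refine ⟨hlev, ?_, ?_⟩
  · intro i hi j hj
    by_contra hc
    push Not at hc
    have hjI := h3 i (hmem i hi) j hj hc
    have : j = i0 := by
      by_contra hj0; exact hjI (hmem j hj0)
    subst this
    have := (lev_zero_neg hb j (nv_mem hb i) (hlev i hi) hc).1
    exact hi0 (by rw [← this]; exact hlev i hi)
  · intro w hw h0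
    obtain ⟨i, hiI, hi⟩ := h2 w (mem_Zf.2 ⟨hw, h0⟩)
    refine ⟨i, ?_, hi⟩
    rintro rfl
    exact hi0I hiI

lemma Zf_two (hb : FF V b) (hz : d ≤ (Zf V b).card + 1) {w w' : Fin d → ℝ}
    (hw : w ∈ V) (hw' : w' ∈ V) (h0 : lev b w = 0) (h0' : lev b w' = 0) (hne : w ≠ w')
    {i j i' j' : Fin d} (hij : i ≠ j) (hij' : i' ≠ j')
    (hi : b.coord i w < 0) (hj : b.coord j w < 0)
    (hi' : b.coord i' w' < 0) (hj' : b.coord j' w' < 0) : False := by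
  classical
  obtain ⟨I, h, h1, h2, h3⟩ := exists_heads hb
  have aux : ∀ w ∈ V, lev b w = 0 → ∀ i j : Fin d, i ≠ j → b.coord i w < 0 → b.coord j w < 0 →
      ∃ l, l ∉ I ∧ w = nv V b l := by
    intro w hw h0 i j hij hi hj
    obtain ⟨m, hm, hwm⟩ := h2 w (mem_Zf.2 ⟨hw, h0⟩)
    by_cases hmi : j = m
    · refine ⟨i, ?_, (lev_zero_neg hb i hw h0 hi).1⟩
      apply h3 m hm i (by rw [← hmi]; exact hij) (by rw [← hwm]; exact hi)
    · refine ⟨j, ?_, (lev_zero_neg hb j hw h0 hj).1⟩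
      apply h3 m hm j hmi (by rw [← hwm]; exact hj)
  obtain ⟨l, hl, hwl⟩ := aux w hw h0 i j hij hi hj
  obtain ⟨l', hl', hwl'⟩ := aux w' hw' h0' i' j' hij' hi' hj'
  have hll : l ≠ l' := by
    rintro rfl
    exact hne (by rw [hwl, hwl'])
  have : I ⊆ (Finset.univ.erase l).erase l' := by
    intro m hm
    simp only [Finset.mem_erase, Finset.mem_univ, and_true]
    exact ⟨fun h => hl' (h ▸ hm), fun h => hl (h ▸ hm)⟩
  have hc := Finset.card_le_card this
  rw [Finset.card_erase_of_mem (by simp [hll.symm]), Finset.card_erase_of_mem (Finset.mem_univ _),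
    Finset.card_univ, Fintype.card_fin] at hc
  have : 0 < d := i.pos
  have h4 : 2 ≤ d := by
    have := i.2; have := j.2
    have : (i : ℕ) ≠ j := fun h => hij (Fin.ext h)
    omega
  omega

/-- vertices of level one -/
lemma card_lev_one (hb : FF V b) [DecidablePred (fun w => lev b w = 1)] :
    (V.filter (fun w => lev b w = 1)).card = d := by
  classical
  have : V.filter (fun w => lev b w = 1) = Finset.univ.image b := by
    ext w
    simp only [Finset.mem_filter, Finset.mem_image, Finset.mem_univ, true_and]
    constructor
    · rintro ⟨hw, h⟩
      obtain ⟨i, hi⟩ := hb.F.eq w hw h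
      exact ⟨i, hi.symm⟩
    · rintro ⟨i, rfl⟩
      exact ⟨hb.F.mem i, lev_basis b i⟩
  rw [this, Finset.card_image_of_injective _ b.injective]; simp

/-- excess -/
def exc (b : Module.Basis (Fin d) ℝ (Fin d → ℝ)) (w : Fin d → ℝ) : ℝ :=
  open Classical in
  lev b w + 1 - 2 * (if lev b w = 1 then 1 else 0) - (if lev b w = 0 then 1 else 0)

lemma sum_exc (hb : FF V b) :
    ∑ w ∈ V, exc b w = lev b (∑ w ∈ V, w) + d - 1 - (Zf V b).card := by
  classical
  unfold exc
  rw [Finset.sum_sub_distrib, Finset.sum_sub_distrib, Finset.sum_add_distrib, ← Finset.mul_sum,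
    Finset.sum_boole, Finset.sum_boole, card_lev_one hb, map_sum]
  have : (Zf V b).card = (V.filter (fun w => lev b w = 0)).card := by
    unfold Zf; congr
  rw [this]
  have hc : (V.card : ℝ) + 1 = 3 * d := by exact_mod_cast hb.H.card
  simp
  linarith

lemma exc_spec (hb : FF V b) {w : Fin d → ℝ} (hw : w ∈ V) :
    exc b w ≤ 0 ∧ (lev b w < -1 → exc b w = lev b w + 1) := by
  classical
  obtain ⟨n, hn⟩ := lev_int hb hw
  have h1 := hb.F.le w hw
  unfold exc
  rw [hn] at h1 ⊢
  have h1' : n ≤ 1 := by exact_mod_cast h1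
  have e1 : ((n : ℝ) = 1) ↔ n = 1 := by norm_cast
  have e0 : ((n : ℝ) = 0) ↔ n = 0 := by norm_cast
  simp only [e1, e0]
  constructor
  · rcases (by omega : n = 1 ∨ n = 0 ∨ n ≤ -1) with h | h | h
    · subst h; norm_num
    · subst h; norm_num
    · rw [if_neg (by omega), if_neg (by omega)]
      have : (n : ℝ) ≤ -1 := by exact_mod_cast h
      linarith
  · intro h
    have : n < -1 := by exact_mod_cast h
    rw [if_neg (by omega), if_neg (by omega)]; ring

/-- levels smaller than -1 are at most -2 -/
lemma lev_lt (hb : FF V b) {w : Fin d → ℝ} (hw : w ∈ V) (h : lev b w < -1) : lev b w ≤ -2 := by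
  obtain ⟨n, hn⟩ := lev_int hb hw
  rw [hn] at h ⊢
  have : n < -1 := by exact_mod_cast h
  have : n ≤ -2 := by omega
  exact_mod_cast this

lemma exc_le (hb : FF V b) {w : Fin d → ℝ} (hw : w ∈ V) :
    lev b (∑ w ∈ V, w) + d - 1 - (Zf V b).card ≤ exc b w := by
  classical
  rw [← sum_exc hb, ← Finset.add_sum_erase _ _ hw]
  have : ∑ x ∈ V.erase w, exc b x ≤ 0 :=
    Finset.sum_nonpos (fun x hx => (exc_spec hb (Finset.mem_of_mem_erase hx)).1)
  linarith

lemma exc_le2 (hb : FF V b) {w w' : Fin d → ℝ} (hw : w ∈ V) (hw' : w' ∈ V) (hne : w' ≠ w) :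
    lev b (∑ w ∈ V, w) + d - 1 - (Zf V b).card ≤ exc b w + exc b w' := by
  classical
  rw [← sum_exc hb, ← Finset.add_sum_erase _ _ hw,
    ← Finset.add_sum_erase _ _ (Finset.mem_erase.2 ⟨hne, hw'⟩)]
  have : ∑ x ∈ (V.erase w).erase w', exc b x ≤ 0 :=
    Finset.sum_nonpos (fun x hx => (exc_spec hb
      (Finset.mem_of_mem_erase (Finset.mem_of_mem_erase hx))).1)
  linarith

lemma sum_lev_le (hb : FF V b) : lev b (∑ w ∈ V, w) ≤ 1 := by
  have h1 := sum_exc hb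
  have h2 : ∑ w ∈ V, exc b w ≤ 0 := Finset.sum_nonpos (fun x hx => (exc_spec hb hx).1)
  have h3 : ((Zf V b).card : ℝ) ≤ d := by exact_mod_cast Zf_card_le hb
  linarith

lemma typeA (hb : FF V b) (hs : lev b (∑ w ∈ V, w) = 1) :
    (Zf V b).card = d ∧ ∀ w ∈ V, -1 ≤ lev b w := by
  have h1 := sum_exc hb
  have h2 : ∑ w ∈ V, exc b w ≤ 0 := Finset.sum_nonpos (fun x hx => (exc_spec hb hx).1)
  have h3 : ((Zf V b).card : ℝ) ≤ d := by exact_mod_cast Zf_card_le hb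
  have h4 : ((Zf V b).card : ℝ) = d := by linarith
  refine ⟨by exact_mod_cast h4, ?_⟩
  intro w hw
  by_contra hc
  push Not at hc
  have h5 := exc_le hb hw
  rw [(exc_spec hb hw).2 hc] at h5
  linarith

lemma type0 (hb : FF V b) (hs : ∑ w ∈ V, w = 0) :
    d ≤ (Zf V b).card + 1 ∧ (∀ w ∈ V, -2 ≤ lev b w) ∧
    (∀ z ∈ V, lev b z < -1 → (Zf V b).card = d ∧ ∀ w ∈ V, w ≠ z → -1 ≤ lev b w) ∧
    ((Zf V b).card = d ∨ ∀ w ∈ V, -1 ≤ lev b w) := by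
  have h1 := sum_exc hb
  have h2 : ∑ w ∈ V, exc b w ≤ 0 := Finset.sum_nonpos (fun x hx => (exc_spec hb hx).1)
  have h3 : ((Zf V b).card : ℝ) ≤ d := by exact_mod_cast Zf_card_le hb
  have h0 : lev b (∑ w ∈ V, w) = 0 := by rw [hs]; simp
  have hZ : (d : ℝ) ≤ (Zf V b).card + 1 := by linarith
  have hZn : d ≤ (Zf V b).card + 1 := by exact_mod_cast hZ
  have hC : ∀ z ∈ V, lev b z < -1 → (Zf V b).card = d := by
    intro z hz hlt
    have h5 := exc_le hb hz
    rw [(exc_spec hb hz).2 hlt] at h5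
    have := lev_lt hb hz hlt
    have h4 : ((Zf V b).card : ℝ) = d := by linarith
    exact_mod_cast h4
  refine ⟨hZn, ?_, ?_, ?_⟩
  · intro w hw
    by_contra hc
    push Not at hc
    have h5 := exc_le hb hw
    rw [(exc_spec hb hw).2 (by linarith)] at h5
    linarith
  · intro z hz hlt
    refine ⟨hC z hz hlt, ?_⟩
    intro w hw hne
    by_contra hc
    push Not at hc
    have h5 := exc_le2 hb hz hw hne
    rw [(exc_spec hb hw).2 (by linarith), (exc_spec hb hz).2 hlt] at h5
    have := lev_lt hb hz hlt
    have := lev_lt hb hw hc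
    linarith
  · by_cases h : ∀ w ∈ V, -1 ≤ lev b w
    · right; exact h
    · push Not at h
      obtain ⟨z, hz, hlt⟩ := h
      left; exact hC z hz hlt

end counting

section good
variable {d : ℕ} {V V' : Finset (Fin d → ℝ)} {b : Module.Basis (Fin d) ℝ (Fin d → ℝ)}
  {W : Fin d → ℝ} {m : ℝ}

/-- every vector lies in the cone over some facet -/
lemma exists_cone (H : Hyp V) (s : Fin d → ℝ) :
    ∃ b, FF V b ∧ ∀ i, 0 ≤ b.coord i s := by
  classical
  have hfin : {b : Module.Basis (Fin d) ℝ (Fin d → ℝ) | IsF V b}.Finite := by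
    have hf : (Set.pi Set.univ (fun _ : Fin d => (V : Set (Fin d → ℝ)))).Finite :=
      Set.Finite.pi (fun _ => V.finite_toSet)
    refine Set.Finite.of_finite_image (f := fun b => (b : Fin d → (Fin d → ℝ)))
      (hf.subset ?_) ?_
    · rintro _ ⟨b, hb, rfl⟩ i _
      exact hb.mem i
    · intro b _ b' _ h
      exact Module.Basis.eq_of_apply_eq (fun i => congrFun h i)
  obtain ⟨b0, hb0⟩ := exists_isF H
  obtain ⟨b, hb, hmax⟩ := Set.exists_max_image _ (fun b => lev b s) hfin ⟨b0, hb0⟩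
  have hF : FF V b := ⟨H, hb⟩
  refine ⟨b, hF, fun i => ?_⟩
  by_contra hc
  push Not at hc
  have := hmax (nbr V b i) (nbr_FF hF i).F
  simp only [lev_nbr hF] at this
  have hk := kk_posR hF i
  nlinarith

structure Setup (V V' : Finset (Fin d → ℝ)) (W : Fin d → ℝ) (m : ℝ) : Prop where
  sub : V' ⊆ V
  sum : ∑ w ∈ V', w = W
  le : ∀ b, FF V b → lev b W ≤ m
  good : ∀ b, FF V b → lev b W = m → (Zf V b).card = d ∧ (∀ w ∈ V', -1 ≤ lev b w) ∧
    (∀ w ∈ V, w ∉ V' → lev b w < -1)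

structure Gd (V V' : Finset (Fin d → ℝ)) (W : Fin d → ℝ) (m : ℝ)
    (b : Module.Basis (Fin d) ℝ (Fin d → ℝ)) : Prop where
  ff : FF V b
  S : Setup V V' W m
  lv : lev b W = m

lemma Gd.nb (g : Gd V V' W m b) {i : Fin d} (hi : b.coord i W = 0) : Gd V V' W m (nbr V b i) :=
  ⟨nbr_FF g.ff i, g.S, by rw [lev_nbr g.ff, hi, g.lv]; ring⟩

lemma Gd.W_nonneg (g : Gd V V' W m b) (i : Fin d) : 0 ≤ b.coord i W := by
  have h := g.S.le _ (nbr_FF g.ff i)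
  rw [lev_nbr g.ff, g.lv] at h
  have hk := kk_posR g.ff i
  by_contra hc
  push Not at hc
  nlinarith

lemma Gd.card (g : Gd V V' W m b) : (Zf V b).card = d := (g.S.good b g.ff g.lv).1

lemma Gd.lev0 (g : Gd V V' W m b) (i : Fin d) : lev b (nv V b i) = 0 := (Zf_full g.ff g.card).1 i

lemma Gd.nn (g : Gd V V' W m b) {i j : Fin d} (h : j ≠ i) : 0 ≤ b.coord j (nv V b i) :=
  (Zf_full g.ff g.card).2.1 i j h

lemma Gd.ex (g : Gd V V' W m b) {w : Fin d → ℝ} (hw : w ∈ V) (h : lev b w = 0) :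
    ∃ i, w = nv V b i :=
  (Zf_full g.ff g.card).2.2 w hw h

lemma Gd.self (g : Gd V V' W m b) (i : Fin d) : kk V b i * b.coord i (nv V b i) = -1 := by
  have := lev_nv g.ff i
  rw [g.lev0] at this; linarith

lemma Gd.inj (g : Gd V V' W m b) {i j : Fin d} (h : nv V b i = nv V b j) : i = j := by
  by_contra hne
  have h1 := g.nn (i := j) (j := i) hne
  rw [← h] at h1
  have := nv_neg g.ff i
  linarith

lemma Gd.mem' (g : Gd V V' W m b) {w : Fin d → ℝ} (hw : w ∈ V) (h : -1 ≤ lev b w) : w ∈ V' := by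
  by_contra hc
  have := (g.S.good b g.ff g.lv).2.2 w hw hc
  linarith

lemma Gd.ge (g : Gd V V' W m b) {w : Fin d → ℝ} (hw : w ∈ V') : -1 ≤ lev b w :=
  (g.S.good b g.ff g.lv).2.1 w hw

/-- trichotomy of vertices -/
lemma Gd.cases (g : Gd V V' W m b) {w : Fin d → ℝ} (hw : w ∈ V') :
    (∃ i, w = b i) ∨ (∃ i, w = nv V b i) ∨ lev b w = -1 := by
  have hwV := g.S.sub hw
  have h1 := g.ff.F.le w hwV
  have h2 := g.ge hw
  obtain ⟨n, hn⟩ := lev_int g.ff hwV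
  have h1' : n ≤ 1 := by rw [hn] at h1; exact_mod_cast h1
  have h2' : -1 ≤ n := by rw [hn] at h2; exact_mod_cast h2
  interval_cases n
  · right; right; rw [hn]; norm_num
  · right; left; exact g.ex hwV (by rw [hn]; norm_num)
  · left; exact g.ff.F.eq w hwV (by rw [hn]; norm_num)

lemma kk_one_of_lev (hb : FF V b) {j : Fin d}
    (h1 : lev (nbr V b j) (nv V (nbr V b j) j) = 0) : kk V b j = 1 := by
  have hb' := nbr_FF hb j
  have h2 := nv_neg hb' j
  have hm := nv_mem hb' j
  set n := nv V (nbr V b j) j with hn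
  rw [nbr_coord_self hb] at h2
  rw [lev_nbr hb] at h1
  have h3 := nv_neg hb j
  have h4 := kk_posR hb j
  have h5 : 0 < b.coord j n := by
    by_contra hc
    push Not at hc
    have := div_nonneg_of_nonpos hc h3.le
    linarith
  have h6 : lev b n = 1 := by
    obtain ⟨k, hk⟩ := lev_int hb hm
    have h7 : 0 < lev b n := by nlinarith
    have h8 := hb.F.le n hm
    rw [hk] at h7 h8 ⊢
    have : 0 < k := by exact_mod_cast h7
    have : k ≤ 1 := by exact_mod_cast h8
    have : k = 1 := by omega
    rw [this]; norm_num
  obtain ⟨l, hl⟩ := hb.F.eq n hm h6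
  by_cases hlj : l = j
  · rw [hl, hlj, coord_self, lev_basis] at h1
    have : (kk V b j : ℝ) = 1 := by linarith
    exact_mod_cast this
  · rw [hl, coord_ne b hlj] at h5; linarith

lemma kk_one_of_card (hb : FF V b) {j : Fin d} (hc : (Zf V (nbr V b j)).card = d) :
    kk V b j = 1 := kk_one_of_lev hb ((Zf_full (nbr_FF hb j) hc).1 j)

lemma Gd.k1 (g : Gd V V' W m b) {i : Fin d} (hi : b.coord i W = 0) : kk V b i = 1 :=
  kk_one_of_card g.ff (g.nb hi).card

open Classical in
def hh (V : Finset (Fin d → ℝ)) (b : Module.Basis (Fin d) ℝ (Fin d → ℝ)) (i : Fin d)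
    (w : Fin d → ℝ) : ℝ :=
  kk V b i * b.coord i w - (if lev b w = 0 ∧ kk V b i * b.coord i w ≠ 0 then 1 else 0) +
    (if lev b w = kk V b i * b.coord i w ∧ kk V b i * b.coord i w ≠ 0 then 1 else 0)

lemma sum_hh (g : Gd V V' W m b) (i : Fin d) (hsub : Zf V (nbr V b i) ⊆ V') :
    ∑ w ∈ V', hh V b i w = kk V b i * b.coord i W - d + (Zf V (nbr V b i)).card := by
  classical
  have h1 : ∀ w, hh V b i w = kk V b i * b.coord i w - (if lev b w = 0 then 1 else 0) +
      (if lev (nbr V b i) w = 0 then 1 else 0) := by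
    intro w
    unfold hh
    rw [lev_nbr g.ff]
    by_cases ha : (kk V b i : ℝ) * b.coord i w = 0
    · simp only [ha, ne_eq, not_true_eq_false, and_false, if_false, sub_zero]; ring
    · simp only [ha, ne_eq, not_false_eq_true, and_true, sub_eq_zero]
  simp only [h1]
  rw [Finset.sum_add_distrib, Finset.sum_sub_distrib, ← Finset.mul_sum, ← map_sum, g.S.sum,
    Finset.sum_boole, Finset.sum_boole]
  have h2 : V'.filter (fun w => lev b w = 0) = Zf V b := by
    ext w
    simp only [Finset.mem_filter, mem_Zf]
    constructor
    · rintro ⟨h, h'⟩; exact ⟨g.S.sub h, h'⟩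
    · rintro ⟨h, h'⟩; exact ⟨g.mem' h (by rw [h']; norm_num), h'⟩
  have h3 : V'.filter (fun w => lev (nbr V b i) w = 0) = Zf V (nbr V b i) := by
    ext w
    simp only [Finset.mem_filter, mem_Zf]
    constructor
    · rintro ⟨h, h'⟩; exact ⟨g.S.sub h, h'⟩
    · rintro ⟨h, h'⟩; exact ⟨hsub (mem_Zf.2 ⟨h, h'⟩), h'⟩
  rw [h2, h3, g.card]

lemma hh_spec (g : Gd V V' W m b) (i : Fin d) {w : Fin d → ℝ} (hw : w ∈ V') (h1 : w ≠ b i)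
    (h2 : w ≠ nv V b i) : 0 ≤ hh V b i w ∧ (hh V b i w ≤ 0 →
      (lev b w = 0 → kk V b i * b.coord i w = 0 ∨ kk V b i * b.coord i w = 1) ∧
      (lev b w = -1 → kk V b i * b.coord i w = 0 ∨ kk V b i * b.coord i w = -1)) := by
  classical
  have hwV := g.S.sub hw
  have hk := kk_posR g.ff i
  obtain ⟨n, hn⟩ := kk_int g.ff i (g.ff.H.lat w hwV)
  unfold hh
  rcases g.cases hw with ⟨j, rfl⟩ | ⟨j, rfl⟩ | h
  · have : j ≠ i := fun h => h1 (by rw [h])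
    rw [coord_ne b this, lev_basis]
    simp
    try (intro h; norm_num at h)
  · have hji : j ≠ i := fun h => h2 (by rw [h])
    have h3 := g.nn (i := j) (j := i) hji.symm
    have h4 : (0:ℝ) ≤ n := by rw [← hn]; positivity
    rw [hn, g.lev0]
    have h5 : 0 ≤ n := by exact_mod_cast h4
    rcases h5.eq_or_lt with h5 | h5
    · rw [← h5]; simp
    · have h6 : (1:ℝ) ≤ n := by exact_mod_cast h5
      have h7 : (n:ℝ) ≠ 0 := by linarith
      have h8 : ¬ ((0:ℝ) = n) := h7.symm
      simp only [h7, h8, true_and, ne_eq, not_false_eq_true, if_true, false_and, if_false]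
      refine ⟨by linarith, fun h => ⟨fun _ => Or.inr (by linarith), fun h => by norm_num at h⟩⟩
  · have h3 := nbr_le g.ff i hwV
    have h4 : lev b w - kk V b i * b.coord i w ≠ 1 := by
      intro h4
      exact h2 (nbr_eq' g.ff i hwV h4 (by rw [h]; norm_num))
    rw [hn, h] at h3 h4 ⊢
    have h5 : -2 ≤ n := by
      have : (-2:ℝ) ≤ n := by linarith
      exact_mod_cast this
    have h6 : n ≠ -2 := by
      rintro rfl; apply h4; push_cast; norm_num
    have h7 : -1 ≤ n := by omega
    rcases h7.eq_or_lt with h7 | h7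
    · rw [← h7]; norm_num
    · have h8 : 0 ≤ n := by omega
      have h9 : (0:ℝ) ≤ n := by exact_mod_cast h8
      have h10 : ¬ ((-1:ℝ) = n) := by linarith
      have h11 : ¬ ((-1:ℝ) = 0) := by norm_num
      simp only [h10, h11, false_and, if_false]
      refine ⟨by linarith, fun h => ⟨fun h => by norm_num at h, fun _ => Or.inl (by linarith)⟩⟩

lemma b_ne_nv (g : Gd V V' W m b) (i j : Fin d) : nv V b i ≠ b j := by
  intro h
  have := g.lev0 i
  rw [h, lev_basis] at this; norm_num at this

lemma Gd.b_mem' (g : Gd V V' W m b) (i : Fin d) : b i ∈ V' :=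
  g.mem' (g.ff.F.mem i) (by rw [lev_basis]; norm_num)

lemma Gd.nv_mem' (g : Gd V V' W m b) (i : Fin d) : nv V b i ∈ V' :=
  g.mem' (nv_mem g.ff i) (by rw [g.lev0]; norm_num)

open Classical in
lemma hh_two (g : Gd V V' W m b) (i : Fin d) :
    hh V b i (b i) + hh V b i (nv V b i) = kk V b i + (if kk V b i = 1 then 1 else 0) - 2 := by
  unfold hh
  rw [g.self, g.lev0, coord_self, lev_basis]
  have hk := kk_posR g.ff i
  have h1 : (kk V b i : ℝ) ≠ 0 := by linarith
  by_cases h : kk V b i = 1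
  · simp [h]; norm_num
  · have h' : ¬ ((1:ℝ) = kk V b i) := by
      intro hc; apply h; exact_mod_cast hc.symm
    simp [h, h']; ring

open Classical in
lemma hh_bound0 (g : Gd V V' W m b) (i : Fin d) (hsub : Zf V (nbr V b i) ⊆ V') :
    kk V b i + (if kk V b i = 1 then 1 else 0) - 2 ≤
    (kk V b i * b.coord i W - d + (Zf V (nbr V b i)).card : ℝ) := by
  rw [← sum_hh g i hsub, ← hh_two g i, ← Finset.add_sum_erase _ _ (g.b_mem' i),
    ← Finset.add_sum_erase _ _ (Finset.mem_erase.2 ⟨b_ne_nv g i i, g.nv_mem' i⟩)]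
  have : 0 ≤ ∑ x ∈ (V'.erase (b i)).erase (nv V b i), hh V b i x :=
    Finset.sum_nonneg (fun x hx => by
      rw [Finset.mem_erase, Finset.mem_erase] at hx
      exact (hh_spec g i hx.2.2 hx.2.1 hx.1).1)
  linarith

open Classical in
lemma hh_bound (g : Gd V V' W m b) (i : Fin d) (hsub : Zf V (nbr V b i) ⊆ V')
    {w : Fin d → ℝ} (hw : w ∈ V') (h1 : w ≠ b i) (h2 : w ≠ nv V b i) :
    kk V b i + (if kk V b i = 1 then 1 else 0) - 2 + hh V b i w ≤
    (kk V b i * b.coord i W - d + (Zf V (nbr V b i)).card : ℝ) := by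
  rw [← sum_hh g i hsub, ← hh_two g i, ← Finset.add_sum_erase _ _ (g.b_mem' i),
    ← Finset.add_sum_erase _ _ (Finset.mem_erase.2 ⟨b_ne_nv g i i, g.nv_mem' i⟩)]
  have := Finset.single_le_sum (s := (V'.erase (b i)).erase (nv V b i)) (f := fun x => hh V b i x)
    (fun x hx => by
      rw [Finset.mem_erase, Finset.mem_erase] at hx
      exact (hh_spec g i hx.2.2 hx.2.1 hx.1).1)
    (Finset.mem_erase.2 ⟨h2, Finset.mem_erase.2 ⟨h1, hw⟩⟩)
  linarith

/-- T2 -/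
lemma Gd.t2 (g : Gd V V' W m b) {i : Fin d} (hi : b.coord i W = 0) {w : Fin d → ℝ} (hw : w ∈ V')
    (h1 : w ≠ b i) (h2 : w ≠ nv V b i) :
      (lev b w = 0 → b.coord i w = 0 ∨ b.coord i w = 1) ∧
      (lev b w = -1 → b.coord i w = 0 ∨ b.coord i w = -1) := by
  classical
  have g' := g.nb hi
  have hsub : Zf V (nbr V b i) ⊆ V' := fun x hx =>
    g'.mem' (mem_Zf.1 hx).1 (by rw [(mem_Zf.1 hx).2]; norm_num)
  have h := hh_bound g i hsub hw h1 h2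
  have hk := g.k1 hi
  have h3 := (hh_spec g i hw h1 h2).2
  rw [g'.card, hk, hi] at h
  simp only [hk, if_true, Int.cast_one, one_mul] at h h3
  apply h3
  linarith

lemma Gd.sum0 (g : Gd V V' W m b) (j : Fin d) : ∑ i, b.coord i (nv V b j) = 0 := by
  rw [← lev_apply]; exact g.lev0 j

lemma Gd.selfk1 (g : Gd V V' W m b) {i : Fin d} (hk : kk V b i = 1) :
    b.coord i (nv V b i) = -1 := by
  have := g.self i
  rw [hk] at this; simpa using this

lemma Gd.self1 (g : Gd V V' W m b) {i : Fin d} (hi : b.coord i W = 0) :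
    b.coord i (nv V b i) = -1 := g.selfk1 (g.k1 hi)

/-- a positive coordinate at least one forces the shape -/
lemma Gd.shape (g : Gd V V' W m b) {i j : Fin d} (hij : i ≠ j) (h : 1 ≤ b.coord i (nv V b j)) :
    nv V b j = b i - b j ∧ kk V b j = 1 := by
  classical
  have hs := g.sum0 j
  rw [← Finset.add_sum_erase _ _ (Finset.mem_univ j),
    ← Finset.add_sum_erase _ _ (Finset.mem_erase.2 ⟨hij, Finset.mem_univ i⟩)] at hs
  have hnn : ∀ l ∈ (Finset.univ.erase j).erase i, 0 ≤ b.coord l (nv V b j) := fun l hl => by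
    simp only [Finset.mem_erase] at hl
    exact g.nn hl.2.1
  have hS := Finset.sum_nonneg hnn
  have hk := kk_posR g.ff j
  have hself := g.self j
  have hge : -1 ≤ b.coord j (nv V b j) := by
    have := nv_neg g.ff j
    nlinarith
  have hj : b.coord j (nv V b j) = -1 := by linarith
  have hi : b.coord i (nv V b j) = 1 := by linarith
  have h0 : ∑ l ∈ (Finset.univ.erase j).erase i, b.coord l (nv V b j) = 0 := by linarith
  rw [Finset.sum_eq_zero_iff_of_nonneg hnn] at h0
  constructor
  · apply coord_ext b
    intro l
    rw [map_sub]
    by_cases hlj : l = j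
    · subst hlj; rw [hj, coord_ne b hij, coord_self]; ring
    by_cases hli : l = i
    · subst hli; rw [hi, coord_ne b (Ne.symm hij), coord_self]; ring
    rw [coord_ne b (Ne.symm hlj), coord_ne b (Ne.symm hli), h0 l (by simp [hli, hlj])]; ring
  · rw [hj] at hself
    have : (kk V b j : ℝ) = 1 := by linarith
    exact_mod_cast this

/-- T3 -/
lemma Gd.t3 (g : Gd V V' W m b) {i j : Fin d} (hi : b.coord i W = 0) (hij : i ≠ j)
    (h : b.coord i (nv V b j) ≠ 0) : nv V b j = b i - b j ∧ kk V b j = 1 := by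
  have h1 : nv V b j ≠ nv V b i := fun h => hij (g.inj h.symm)
  rcases (g.t2 hi (g.nv_mem' j) (b_ne_nv g j i) h1).1 (g.lev0 j) with h2 | h2
  · exact absurd h2 h
  · exact g.shape hij h2.ge

end good

section tstruct
variable {d : ℕ} {V V' : Finset (Fin d → ℝ)} {b : Module.Basis (Fin d) ℝ (Fin d → ℝ)}
  {W : Fin d → ℝ} {m : ℝ}

lemma bc (b : Module.Basis (Fin d) ℝ (Fin d → ℝ)) (i j : Fin d) :
    b.coord i (b j) = if j = i then 1 else 0 := by
  split_ifs with h
  · rw [h]; exact coord_self b i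
  · exact coord_ne b h

lemma Gd.nbW (g : Gd V V' W m b) {i : Fin d} (hi : b.coord i W = 0) (l : Fin d) :
    (nbr V b i).coord l W = b.coord l W := by
  by_cases hl : l = i
  · subst hl; rw [nbr_coord_self g.ff, hi]; simp
  · rw [nbr_coord_ne g.ff hl, hi]; simp

/-- T4 -/
lemma Gd.t4 (g : Gd V V' W m b) {i : Fin d} (hi : b.coord i W = 0) {y : Fin d → ℝ} (hy : y ∈ V)
    (hl : lev b y = -1) (hc : b.coord i y = -1) :
    ∃ l, l ≠ i ∧ y = nv V b i - b l ∧ nv V b l = b i - b l := by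
  have g' := g.nb hi
  have hk := g.k1 hi
  have h1 : lev (nbr V b i) y = 0 := by
    rw [lev_nbr g.ff, hl, hc, hk]; norm_num
  obtain ⟨l, hl'⟩ := g'.ex hy h1
  have hs := g.self1 hi
  have h2 : (nbr V b i).coord i y = 1 := by
    rw [nbr_coord_self g.ff, hc, hs]; norm_num
  have hli : l ≠ i := by
    rintro rfl
    have := nv_neg g'.ff l
    rw [← hl', h2] at this; norm_num at this
  have h3 := g'.t3 (i := i) (j := l) (by rw [g.nbW hi, hi]) hli.symm (by rw [← hl', h2]; norm_num)
  rw [← hl', nbr_ne g.ff hli] at h3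
  refine ⟨l, hli, h3.1, ?_⟩
  by_cases h4 : b.coord i (nv V b l) = 0
  · exfalso
    have h5 : lev (nbr V b i) (nv V b l) = 0 := by
      rw [lev_nbr g.ff, g.lev0, h4]; simp
    have h6 : (nbr V b i).coord l (nv V b l) < 0 := by
      rw [nbr_coord_ne g.ff hli, h4]; simp only [zero_div, mul_zero, sub_zero]
      exact nv_neg g.ff l
    have h7 := (lev_zero_neg g'.ff l (nv_mem g.ff l) h5 h6).1
    rw [h7, ← hl', hc] at h4
    norm_num at h4
  · exact (g.t3 hi hli.symm h4).1

/-- T6 -/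
lemma Gd.t6 (g : Gd V V' W m b) {i j : Fin d} (hi : b.coord i W = 0) (hij : j ≠ i)
    (hx : nv V b j = b i - b j) : nv V b i - b j ∈ V ∧ lev b (nv V b i - b j) = -1 := by
  have g' := g.nb hi
  refine ⟨?_, by rw [map_sub, g.lev0, lev_basis]; norm_num⟩
  have h2 : nv V (nbr V b i) j ≠ nv V (nbr V b i) i := fun h => hij (g'.inj h)
  by_cases h : (nbr V b i).coord i (nv V (nbr V b i) j) = 0
  · exfalso
    have h3 : b.coord i (nv V (nbr V b i) j) = 0 := by
      rw [nbr_coord_self g.ff, g.self1 hi] at h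
      simpa using h
    have h4 : lev b (nv V (nbr V b i) j) = 0 := by
      have := g'.lev0 j
      rw [lev_nbr g.ff, h3] at this; simpa using this
    have h5 : b.coord j (nv V (nbr V b i) j) < 0 := by
      have := nv_neg g'.ff j
      rw [nbr_coord_ne g.ff hij, h3] at this; simpa using this
    have h6 := (lev_zero_neg g.ff j (nv_mem g'.ff j) h4 h5).1
    rw [h6, hx, map_sub, coord_self, coord_ne b hij] at h3
    norm_num at h3
  · have h3 := (g'.t3 (by rw [g.nbW hi, hi]) hij.symm h).1
    rw [nbr_ne g.ff hij] at h3
    have h4 := nv_mem g'.ff j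
    rw [h3] at h4
    exact h4

lemma Gd.hex_symm (g : Gd V V' W m b) {i a : Fin d} (hi : b.coord i W = 0)
    (ha : b.coord a W = 0) (hai : a ≠ i) (hx : nv V b i = b a - b i) :
    nv V b a = b i - b a := by
  obtain ⟨h1, h2⟩ := g.t6 ha hai.symm hx
  by_cases h : b.coord i (nv V b a) = 0
  · exfalso
    obtain ⟨l, hl, h3, h4⟩ := g.t4 hi h1 h2 (by rw [map_sub, h, coord_self]; norm_num)
    have h5 : nv V b a = b a - b l := by
      rw [hx] at h3
      have : nv V b a = (b a - b i - b l) + b i := by rw [← h3]; abel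
      rw [this]; abel
    have h6 := nv_neg g.ff a
    rw [h5, map_sub, coord_self, bc] at h6
    split_ifs at h6 <;> norm_num at h6
  · exact (g.t3 hi hai.symm h).1

lemma Gd.hex_neg (g : Gd V V' W m b) {i a : Fin d} (hi : b.coord i W = 0)
    (ha : b.coord a W = 0) (hai : a ≠ i) (hx : nv V b i = b a - b i) : - b i ∈ V := by
  have h := (g.t6 hi hai (g.hex_symm hi ha hai hx)).1
  rw [hx] at h
  have h' : b a - b i - b a = - b i := by abel
  rwa [h'] at h

lemma Gd.coord_T_ne_one (g : Gd V V' W m b) {a : Fin d} (ha : b.coord a W = 0) {y : Fin d → ℝ}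
    (hy : y ∈ V) (hl : lev b y = -1) : b.coord a y = 0 ∨ b.coord a y = -1 := by
  refine (g.t2 ha (g.mem' hy hl.ge) ?_ ?_).2 hl
  · rintro rfl; rw [lev_basis] at hl; norm_num at hl
  · rintro rfl; rw [g.lev0] at hl; norm_num at hl

lemma Gd.hex_y (g : Gd V V' W m b) {i a : Fin d} (hi : b.coord i W = 0)
    (ha : b.coord a W = 0) (hai : a ≠ i) (hx : nv V b i = b a - b i) {y : Fin d → ℝ} (hy : y ∈ V)
    (hl : lev b y = -1) (hc : b.coord i y ≠ 0) : y = - b i := by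
  have hc' := (g.coord_T_ne_one hi hy hl).resolve_left hc
  obtain ⟨l, hli, h3, h4⟩ := g.t4 hi hy hl hc'
  rw [hx] at h3
  have hla : l = a := by
    by_contra hne
    have := g.coord_T_ne_one ha hy hl
    rw [h3, map_sub, map_sub, coord_self, coord_ne b hai.symm, coord_ne b hne] at this
    norm_num at this
  rw [h3, hla]; abel

lemma Gd.hex_x (g : Gd V V' W m b) {i a j : Fin d} (hi : b.coord i W = 0)
    (ha : b.coord a W = 0) (hai : a ≠ i) (hx : nv V b i = b a - b i) (hji : j ≠ i)
    (hc : b.coord i (nv V b j) ≠ 0) : j = a := by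
  have h1 := (g.t3 hi hji.symm hc).1
  obtain ⟨h2, h3⟩ := g.t6 hi hji h1
  by_contra hne
  have := g.coord_T_ne_one ha h2 h3
  rw [hx, map_sub, map_sub, coord_self, coord_ne b hai.symm, coord_ne b hne] at this
  norm_num at this

/-- hexagonal index -/
def Hx (V : Finset (Fin d → ℝ)) (b : Module.Basis (Fin d) ℝ (Fin d → ℝ)) (W : Fin d → ℝ)
    (i : Fin d) : Prop :=
  b.coord i W = 0 ∧ ∃ a, a ≠ i ∧ b.coord a W = 0 ∧ nv V b i = b a - b i

lemma Gd.hx_symm (g : Gd V V' W m b) {i a : Fin d} (hi : b.coord i W = 0)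
    (ha : b.coord a W = 0) (hai : a ≠ i) (hx : nv V b i = b a - b i) : Hx V b W a :=
  ⟨ha, i, hai.symm, hi, g.hex_symm hi ha hai hx⟩

lemma Gd.nonhx_x (g : Gd V V' W m b) {i a : Fin d} (hi : b.coord i W = 0) (hn : ¬ Hx V b W i)
    (ha : b.coord a W = 0) (hai : a ≠ i) : b.coord a (nv V b i) = 0 := by
  by_contra h
  exact hn ⟨hi, a, hai, ha, (g.t3 ha hai h).1⟩

lemma Gd.nonhx_y (g : Gd V V' W m b) {i : Fin d} (hi : b.coord i W = 0) (hn : ¬ Hx V b W i)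
    {y : Fin d → ℝ} (hy : y ∈ V) (hl : lev b y = -1) (hc : b.coord i y ≠ 0) :
    ∃ l, b.coord l W ≠ 0 ∧ y = nv V b i - b l ∧ nv V b l = b i - b l ∧ kk V b l = 1 := by
  have hc' := (g.coord_T_ne_one hi hy hl).resolve_left hc
  obtain ⟨l, hli, h3, h4⟩ := g.t4 hi hy hl hc'
  have h5 : b.coord i (nv V b l) ≠ 0 := by
    rw [h4, map_sub, coord_self, coord_ne b hli]; norm_num
  refine ⟨l, ?_, h3, h4, (g.t3 hi hli.symm h5).2⟩
  intro hlW
  exact hn (g.hx_symm hlW hi hli.symm h4)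

open Classical in
lemma Gd.hx_even (g : Gd V V' W m b) : Even (Finset.univ.filter (fun i => Hx V b W i)).card := by
  set s := Finset.univ.filter (fun i => Hx V b W i) with hs
  have hmem : ∀ i, i ∈ s ↔ Hx V b W i := by intro i; simp [hs]
  have key : ∑ i ∈ s, (1 : ZMod 2) = 0 := by
    have hch : ∀ i (hi : i ∈ s), ∃ a, a ≠ i ∧ b.coord a W = 0 ∧ nv V b i = b a - b i :=
      fun i hi => ((hmem i).1 hi).2
    choose f hf1 hf2 hf3 using hch
    have hfm : ∀ i hi, f i hi ∈ s := fun i hi =>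
      (hmem _).2 (g.hx_symm ((hmem i).1 hi).1 (hf2 i hi) (hf1 i hi) (hf3 i hi))
    refine Finset.sum_involution f (fun i hi => by decide) (fun i hi _ => hf1 i hi) hfm ?_
    intro i hi
    have h1 := hf3 (f i hi) (hfm i hi)
    rw [g.hex_symm ((hmem i).1 hi).1 (hf2 i hi) (hf1 i hi) (hf3 i hi)] at h1
    have h2 : b i = b (f (f i hi) (hfm i hi)) := sub_left_injective h1
    exact (b.injective h2).symm
  rw [Finset.sum_const, nsmul_eq_mul, mul_one] at key
  exact (ZMod.natCast_eq_zero_iff_even).1 key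

open Classical in
/-- level -1 vertices -/
def Yf (V' : Finset (Fin d → ℝ)) (b : Module.Basis (Fin d) ℝ (Fin d → ℝ)) : Finset (Fin d → ℝ) :=
  V'.filter (fun w => lev b w = -1)

lemma Gd.Y_card (g : Gd V V' W m b) : (Yf V' b).card + 2 * d = V'.card := by
  classical
  have h1 : V' = (Finset.univ.image b ∪ Finset.univ.image (nv V b)) ∪ Yf V' b := by
    ext w
    simp only [Finset.mem_union, Finset.mem_image, Finset.mem_univ, true_and, Yf, Finset.mem_filter]
    constructor
    · intro hw
      rcases g.cases hw with ⟨i, h⟩ | ⟨i, h⟩ | h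
      · exact Or.inl (Or.inl ⟨i, h.symm⟩)
      · exact Or.inl (Or.inr ⟨i, h.symm⟩)
      · exact Or.inr ⟨hw, h⟩
    · rintro ((⟨i, rfl⟩ | ⟨i, rfl⟩) | h)
      · exact g.b_mem' i
      · exact g.nv_mem' i
      · exact h.1
  have h2 : Disjoint (Finset.univ.image b) (Finset.univ.image (nv V b)) := by
    rw [Finset.disjoint_left]
    simp only [Finset.mem_image, Finset.mem_univ, true_and]
    rintro _ ⟨i, rfl⟩ ⟨j, hj⟩
    exact b_ne_nv g j i hj
  have h3 : Disjoint (Finset.univ.image b ∪ Finset.univ.image (nv V b)) (Yf V' b) := by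
    rw [Finset.disjoint_left]
    simp only [Finset.mem_union, Finset.mem_image, Finset.mem_univ, true_and, Yf, Finset.mem_filter]
    rintro _ (⟨i, rfl⟩ | ⟨i, rfl⟩) ⟨_, h⟩
    · rw [lev_basis] at h; norm_num at h
    · rw [g.lev0] at h; norm_num at h
  have h4 := congrArg Finset.card h1
  rw [Finset.card_union_of_disjoint h3, Finset.card_union_of_disjoint h2,
    Finset.card_image_of_injective _ b.injective,
    Finset.card_image_of_injective _ (fun i j h => g.inj h)] at h4
  simp at h4
  omega

lemma mem_Yf {y : Fin d → ℝ} : y ∈ Yf V' b ↔ y ∈ V' ∧ lev b y = -1 := by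
  classical
  simp [Yf]

end tstruct

section caseA
variable {d : ℕ} {V V' : Finset (Fin d → ℝ)} {b : Module.Basis (Fin d) ℝ (Fin d → ℝ)}
  {W : Fin d → ℝ} {m : ℝ}

/-- output of the combinatorial analysis -/
structure Out (V : Finset (Fin d → ℝ)) (b : Module.Basis (Fin d) ℝ (Fin d → ℝ)) (p q : Fin d)
    (L : Set (Fin d → ℝ)) : Prop where
  ff : FF V b
  ne : p ≠ q
  hex : ∀ i, i ≠ p → i ≠ q → ∃ a, a ≠ i ∧ a ≠ p ∧ a ≠ q ∧ nv V b i = b a - b i ∧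
    nv V b a = b i - b a
  int : ∀ i, i ≠ p → i ≠ q → ∀ x, IsLP x → ∃ n : ℤ, b.coord i x = n
  mem : ∀ w, w ∈ V ↔ w ∈ L ∨ ∃ i, i ≠ p ∧ i ≠ q ∧ (w = b i ∨ w = - b i ∨ w = nv V b i)

open Classical in
def hxF (V : Finset (Fin d → ℝ)) (b : Module.Basis (Fin d) ℝ (Fin d → ℝ)) (W : Fin d → ℝ) :
    Finset (Fin d) := Finset.univ.filter (fun i => Hx V b W i)

lemma mem_hxF {i : Fin d} : i ∈ hxF V b W ↔ Hx V b W i := by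
  classical
  simp [hxF]

lemma hx_card_le {p q : Fin d} (hpq : p ≠ q) (hp : ¬ Hx V b W p) (hq : ¬ Hx V b W q) :
    (hxF V b W).card + 2 ≤ d ∧
      (d ≤ (hxF V b W).card + 2 → ∀ i, i ≠ p → i ≠ q → Hx V b W i) := by
  classical
  have hsub : hxF V b W ⊆ Finset.univ \ {p, q} := by
    intro i hi
    rw [mem_hxF] at hi
    simp only [Finset.mem_sdiff, Finset.mem_univ, true_and, Finset.mem_insert,
      Finset.mem_singleton, not_or]
    exact ⟨fun h => hp (h ▸ hi), fun h => hq (h ▸ hi)⟩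
  have hc : (Finset.univ \ {p, q} : Finset (Fin d)).card + 2 = d := by
    have h2 : ({p, q} : Finset (Fin d)).card = 2 := Finset.card_pair hpq
    have := Finset.card_sdiff_add_card_eq_card (Finset.subset_univ ({p, q} : Finset (Fin d)))
    rw [h2] at this
    simpa using this
  have h1 := Finset.card_le_card hsub
  refine ⟨by omega, fun h i hip hiq => ?_⟩
  have := Finset.eq_of_subset_of_card_le hsub (by omega)
  rw [← mem_hxF, this]
  simp [hip, hiq]

lemma Gd.out (g : Gd V V' W m b) {p q : Fin d} (hpq : p ≠ q) (hp : ¬ Hx V b W p)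
    (hq : ¬ Hx V b W q) (hall : ∀ i, i ≠ p → i ≠ q → Hx V b W i) {L : Set (Fin d → ℝ)}
    (hL : ∀ w ∈ L, w ∈ V) (h1 : b p ∈ L) (h2 : b q ∈ L) (h3 : nv V b p ∈ L) (h4 : nv V b q ∈ L)
    (h5 : ∀ y ∈ V, y ∉ V' → y ∈ L)
    (h6 : ∀ y ∈ Yf V' b, y ∈ L ∨ ∃ i, i ≠ p ∧ i ≠ q ∧ y = - b i) : Out V b p q L where
  ff := g.ff
  ne := hpq
  hex := by
    intro i hip hiq
    obtain ⟨hi, a, hai, ha, hx⟩ := hall i hip hiq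
    have hs := g.hx_symm hi ha hai hx
    refine ⟨a, hai, fun h => hp (h ▸ hs), fun h => hq (h ▸ hs), hx, g.hex_symm hi ha hai hx⟩
  int := by
    intro i hip hiq x hx
    obtain ⟨n, hn⟩ := kk_int g.ff i hx
    rw [g.k1 (hall i hip hiq).1] at hn
    exact ⟨n, by simpa using hn⟩
  mem := by
    intro w
    constructor
    · intro hw
      by_cases hw' : w ∈ V'
      · rcases g.cases hw' with ⟨i, h⟩ | ⟨i, h⟩ | h
        · by_cases hip : i = p
          · left; rw [h, hip]; exact h1
          by_cases hiq : i = q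
          · left; rw [h, hiq]; exact h2
          exact Or.inr ⟨i, hip, hiq, Or.inl h⟩
        · by_cases hip : i = p
          · left; rw [h, hip]; exact h3
          by_cases hiq : i = q
          · left; rw [h, hiq]; exact h4
          exact Or.inr ⟨i, hip, hiq, Or.inr (Or.inr h)⟩
        · rcases h6 w (mem_Yf.2 ⟨hw', h⟩) with h | ⟨i, hip, hiq, h⟩
          · exact Or.inl h
          · exact Or.inr ⟨i, hip, hiq, Or.inr (Or.inl h)⟩
      · exact Or.inl (h5 w hw hw')
    · rintro (h | ⟨i, hip, hiq, h⟩)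
      · exact hL w h
      · rcases h with rfl | rfl | rfl
        · exact g.ff.F.mem i
        · obtain ⟨hi, a, hai, ha, hx⟩ := hall i hip hiq
          exact g.hex_neg hi ha hai hx
        · exact nv_mem g.ff i

lemma Gd.lev_neg_b (i : Fin d) : lev b (- b i) = -1 := by rw [map_neg, lev_basis]

/-- case A, one support index -/
lemma caseA1 (hde : Even d) (g : Gd V V W m b) {p : Fin d}
    (hS : ∀ i, i ≠ p → b.coord i W = 0) (hpW : b.coord p W ≠ 0) :
    ∃ q, kk V b q = 1 ∧ Out V b p q {b p, b q, b q - b p, b p - b q, - b q} := by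
  classical
  have hpn : ¬ Hx V b W p := fun h => hpW h.1
  -- non-hex indices
  have hx : ∀ i, i ≠ p → ¬ Hx V b W i → nv V b i = b p - b i := by
    intro i hip hn
    have h1 := g.sum0 i
    have hpu : p ∈ Finset.univ.erase i := Finset.mem_erase.2 ⟨Ne.symm hip, Finset.mem_univ p⟩
    rw [← Finset.add_sum_erase _ _ (Finset.mem_univ i), ← Finset.add_sum_erase _ _ hpu,
      g.self1 (hS i hip), Finset.sum_eq_zero] at h1
    · exact (g.shape (Ne.symm hip) (by linarith)).1
    · intro a ha
      simp only [Finset.mem_erase] at ha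
      exact g.nonhx_x (hS i hip) hn (hS a ha.1) ha.2.1
  obtain ⟨q, hqp, hq⟩ : ∃ q, q ≠ p ∧ b.coord q (nv V b p) ≠ 0 := by
    by_contra hc
    push Not at hc
    have h1 := g.sum0 p
    rw [← Finset.add_sum_erase _ _ (Finset.mem_univ p), Finset.sum_eq_zero] at h1
    · have := nv_neg g.ff p; linarith
    · intro a ha
      exact hc a (Finset.mem_erase.1 ha).1
  have hxp := (g.t3 (hS q hqp) hqp hq).1
  have hqn : ¬ Hx V b W q := by
    rintro ⟨h1, a, haq, ha, hxa⟩
    have := g.hex_x h1 ha haq hxa hqp.symm hq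
    exact hpW (this ▸ ha)
  have hxq := hx q hqp hqn
  have hnq : - b q ∈ V := by
    have := (g.t6 (hS q hqp) hqp.symm hxp).1
    rw [hxq] at this
    have h' : b p - b q - b p = - b q := by abel
    rwa [h'] at this
  have hY : ∀ y ∈ Yf V b, (∃ i, Hx V b W i ∧ y = - b i) ∨ y = - b q ∨ y = - b p := by
    intro y hy
    rw [mem_Yf] at hy
    obtain ⟨hyV, hyl⟩ := hy
    by_cases h1 : ∃ i, Hx V b W i ∧ b.coord i y ≠ 0
    · obtain ⟨i, ⟨hi, a, hai, ha, hxa⟩, hc⟩ := h1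
      exact Or.inl ⟨i, ⟨hi, a, hai, ha, hxa⟩, g.hex_y hi ha hai hxa hyV hyl hc⟩
    by_cases h2 : ∃ i, i ≠ p ∧ b.coord i y ≠ 0
    · obtain ⟨i, hip, hc⟩ := h2
      have hin : ¬ Hx V b W i := fun h => h1 ⟨i, h, hc⟩
      obtain ⟨l, hl, hy1, hl1, _⟩ := g.nonhx_y (hS i hip) hin hyV hyl hc
      have hlp : l = p := by
        by_contra h; exact hl (hS l h)
      subst hlp
      rw [hxp] at hl1
      have hiq : q = i := b.injective (sub_left_injective hl1)
      subst hiq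
      right; left
      rw [hy1, hxq]; abel
    · push Not at h2
      right; right
      have h3 : b.coord p y = -1 := by
        rw [lev_apply, Finset.sum_eq_single p (fun i _ hi => h2 i hi) (by simp)] at hyl
        exact hyl
      apply coord_ext b
      intro i
      rw [map_neg]
      by_cases hi : i = p
      · rw [hi, h3, coord_self]
      · rw [h2 i hi, coord_ne b (Ne.symm hi)]; simp
  have hYc := g.Y_card
  have hVc := g.ff.H.card
  have hsub : Yf V b ⊆ (hxF V b W ∪ {q, p}).image (fun i => - b i) := by
    intro y hy
    simp only [Finset.mem_image, Finset.mem_union, Finset.mem_insert, Finset.mem_singleton]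
    rcases hY y hy with ⟨i, hi, h⟩ | h | h
    · exact ⟨i, Or.inl (mem_hxF.2 hi), h.symm⟩
    · exact ⟨q, by simp, h.symm⟩
    · exact ⟨p, by simp, h.symm⟩
  have h1 := (Finset.card_le_card hsub).trans (Finset.card_image_le.trans (Finset.card_union_le _ _))
  rw [Finset.card_pair hqp] at h1
  obtain ⟨h2, h3⟩ := hx_card_le hqp.symm hpn hqn
  have hev : Even (hxF V b W).card := by
    unfold hxF; exact g.hx_even
  have hall := h3 (by
    obtain ⟨r, hr⟩ := hev
    obtain ⟨r', hr'⟩ := hde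
    omega)
  have hnp : - b p ∉ V := by
    intro hnp
    have hsub : Finset.univ.image (fun i => - b i) ⊆ Yf V b := by
      intro y hy
      simp only [Finset.mem_image, Finset.mem_univ, true_and] at hy
      obtain ⟨i, rfl⟩ := hy
      rw [mem_Yf]
      refine ⟨?_, Gd.lev_neg_b i⟩
      by_cases hip : i = p
      · rw [hip]; exact hnp
      by_cases hiq : i = q
      · rw [hiq]; exact hnq
      obtain ⟨hi, a, hai, ha, hxa⟩ := hall i hip hiq
      exact g.hex_neg hi ha hai hxa
    have := Finset.card_le_card hsub
    rw [Finset.card_image_of_injective _ (fun i j h => b.injective (neg_injective h))] at this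
    simp at this
    omega
  refine ⟨q, g.k1 (hS q hqp), g.out hqp.symm hpn hqn hall ?_ ?_ ?_ ?_ ?_ ?_ ?_⟩
  · rintro w (rfl | rfl | rfl | rfl | rfl)
    · exact g.ff.F.mem p
    · exact g.ff.F.mem q
    · rw [← hxp]; exact nv_mem g.ff p
    · rw [← hxq]; exact nv_mem g.ff q
    · exact hnq
  · simp
  · simp
  · rw [hxp]; simp
  · rw [hxq]; simp
  · intro y h h'; exact absurd h h'
  · intro y hy
    rcases hY y hy with ⟨i, hi, h⟩ | h | h
    · right
      exact ⟨i, fun h => hpn (h ▸ hi), fun h => hqn (h ▸ hi), h⟩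
    · left; rw [h]; simp
    · exfalso; apply hnp; rw [← h]; exact (mem_Yf.1 hy).1

lemma isLP_sum (s : Finset (Fin d → ℝ)) (h : ∀ w ∈ s, IsLP w) : IsLP (∑ w ∈ s, w) := by
  classical
  intro i
  induction s using Finset.induction_on with
  | empty => exact ⟨0, by simp⟩
  | insert a s ha ih =>
    obtain ⟨n, hn⟩ := ih (fun w hw => h w (Finset.mem_insert_of_mem hw))
    obtain ⟨k, hk⟩ := h a (Finset.mem_insert_self a s) i
    refine ⟨k + n, ?_⟩
    rw [Finset.sum_insert ha, Pi.add_apply, hn, hk]; push_cast; ring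

lemma caseA2_aux (g : Gd V V W 1 b) {p q : Fin d} (hpq : p ≠ q) (hp : b.coord p W ≠ 0)
    (hq : b.coord q W ≠ 0) :
    1 / 2 ≤ b.coord p W ∧ kk V b p * b.coord p W = kk V b p - 1 ∧ 2 ≤ kk V b p ∧
    ∀ w ∈ V, w ≠ b p → w ≠ nv V b p →
      (lev b w = 0 → kk V b p * b.coord p w = 0 ∨ kk V b p * b.coord p w = 1) ∧
      (lev b w = -1 → kk V b p * b.coord p w = 0 ∨ kk V b p * b.coord p w = -1) := by
  classical
  have hp0 : 0 < b.coord p W := lt_of_le_of_ne (g.W_nonneg p) (Ne.symm hp)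
  have hq0 : 0 < b.coord q W := lt_of_le_of_ne (g.W_nonneg q) (Ne.symm hq)
  have hlv := g.lv
  rw [lev_apply, ← Finset.add_sum_erase _ _ (Finset.mem_univ p)] at hlv
  have hle := Finset.single_le_sum (s := Finset.univ.erase p) (f := fun i => b.coord i W)
    (fun i _ => g.W_nonneg i) (Finset.mem_erase.2 ⟨hpq.symm, Finset.mem_univ q⟩)
  have hp1 : b.coord p W < 1 := by linarith
  have hWLP : IsLP W := by
    rw [← g.S.sum]; exact isLP_sum V g.ff.H.lat
  obtain ⟨e, he⟩ := kk_int g.ff p hWLP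
  have hk := kk_posR g.ff p
  have he1 : 1 ≤ e := by
    have : (0:ℝ) < e := by rw [← he]; positivity
    have : 0 < e := by exact_mod_cast this
    omega
  have hek : e < kk V b p := by
    have : (e:ℝ) < kk V b p := by rw [← he]; nlinarith
    exact_mod_cast this
  have hk2 : 2 ≤ kk V b p := by omega
  have hk2' : (2:ℝ) ≤ kk V b p := by exact_mod_cast hk2
  have hk1 : kk V b p ≠ 1 := by omega
  have hcd : (Zf V (nbr V b p)).card ≠ d := fun h => hk1 (kk_one_of_card g.ff h)
  have hcd' : (Zf V (nbr V b p)).card + 1 ≤ d := by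
    have := Zf_card_le (nbr_FF g.ff p)
    omega
  have hcdR : ((Zf V (nbr V b p)).card : ℝ) + 1 ≤ d := by exact_mod_cast hcd'
  have hsub : Zf V (nbr V b p) ⊆ V := fun x hx => (mem_Zf.1 hx).1
  have h0 := hh_bound0 g p hsub
  rw [if_neg hk1, he] at h0
  have hek' : (e:ℝ) ≤ kk V b p - 1 := by
    have : e ≤ kk V b p - 1 := by omega
    exact_mod_cast this
  have hee : (e:ℝ) = kk V b p - 1 := by linarith
  refine ⟨?_, by rw [he, hee], hk2, ?_⟩
  · rw [hee] at he
    by_contra hc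
    push Not at hc
    nlinarith
  · intro w hw h1 h2
    have h3 := hh_bound g p hsub hw h1 h2
    rw [if_neg hk1, he] at h3
    exact (hh_spec g p hw h1 h2).2 (by linarith)

lemma caseA2_x (g : Gd V V W 1 b) {p q : Fin d} (hpq : p ≠ q) (hS : ∀ i, i ≠ p → i ≠ q → b.coord i W = 0)
    (hk : kk V b p = 2) : nv V b p = (1/2 : ℝ) • (b q - b p) := by
  classical
  have h1 := g.self p
  rw [hk] at h1
  push_cast at h1
  have h2 : b.coord p (nv V b p) = -1/2 := by linarith
  have h3 : ∀ i, i ≠ p → i ≠ q → b.coord i (nv V b p) = 0 := by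
    intro i hip hiq
    by_contra hc
    have := (g.t3 (hS i hip hiq) hip hc).2
    omega
  have h4 : b.coord q (nv V b p) = 1/2 := by
    have hs := g.sum0 p
    rw [← Finset.add_sum_erase _ _ (Finset.mem_univ p),
      ← Finset.add_sum_erase _ _ (Finset.mem_erase.2 ⟨hpq.symm, Finset.mem_univ q⟩),
      Finset.sum_eq_zero] at hs
    · linarith
    · intro i hi
      simp only [Finset.mem_erase] at hi
      exact h3 i hi.2.1 hi.1
  apply coord_ext b
  intro i
  rw [map_smul, map_sub, smul_eq_mul]
  by_cases hip : i = p
  · rw [hip, h2, coord_self, coord_ne b hpq.symm]; norm_num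
  by_cases hiq : i = q
  · rw [hiq, h4, coord_self, coord_ne b hpq]; norm_num
  rw [h3 i hip hiq, coord_ne b (Ne.symm hip), coord_ne b (Ne.symm hiq)]; norm_num

/-- case A, two support indices -/
lemma caseA2 (g : Gd V V W 1 b) {p q : Fin d} (hpq : p ≠ q) (hp : b.coord p W ≠ 0)
    (hq : b.coord q W ≠ 0) : kk V b p = 2 ∧ kk V b q = 2 ∧
    Out V b p q {b p, b q, (1/2 : ℝ) • (b q - b p), (1/2 : ℝ) • (b p - b q),
      (-1/2 : ℝ) • (b p + b q)} := by
  classical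
  obtain ⟨hp1, hp2, hp3, hp4⟩ := caseA2_aux g hpq hp hq
  obtain ⟨hq1, hq2, hq3, hq4⟩ := caseA2_aux g hpq.symm hq hp
  have hlv := g.lv
  rw [lev_apply, ← Finset.add_sum_erase _ _ (Finset.mem_univ p),
    ← Finset.add_sum_erase _ _ (Finset.mem_erase.2 ⟨hpq.symm, Finset.mem_univ q⟩)] at hlv
  have hnn := Finset.sum_nonneg (s := (Finset.univ.erase p).erase q) (f := fun i => b.coord i W)
    (fun i _ => g.W_nonneg i)
  have hp5 : b.coord p W = 1/2 := by linarith
  have hq5 : b.coord q W = 1/2 := by linarith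
  have h0 : ∑ i ∈ (Finset.univ.erase p).erase q, b.coord i W = 0 := by linarith
  rw [Finset.sum_eq_zero_iff_of_nonneg (fun i _ => g.W_nonneg i)] at h0
  have hS : ∀ i, i ≠ p → i ≠ q → b.coord i W = 0 := fun i hip hiq => h0 i (by simp [hip, hiq])
  have hkp : kk V b p = 2 := by
    rw [hp5] at hp2
    have : (kk V b p : ℝ) = 2 := by linarith
    exact_mod_cast this
  have hkq : kk V b q = 2 := by
    rw [hq5] at hq2
    have : (kk V b q : ℝ) = 2 := by linarith
    exact_mod_cast this
  refine ⟨hkp, hkq, ?_⟩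
  have hxp := caseA2_x g hpq hS hkp
  have hxq := caseA2_x g hpq.symm (fun i h h' => hS i h' h) hkq
  have hpn : ¬ Hx V b W p := fun h => hp h.1
  have hqn : ¬ Hx V b W q := fun h => hq h.1
  have hY : ∀ y ∈ Yf V b, (∃ i, Hx V b W i ∧ y = - b i) ∨ y = (-1/2 : ℝ) • (b p + b q) := by
    intro y hy
    rw [mem_Yf] at hy
    obtain ⟨hyV, hyl⟩ := hy
    by_cases h1 : ∃ i, Hx V b W i ∧ b.coord i y ≠ 0
    · obtain ⟨i, ⟨hi, a, hai, ha, hxa⟩, hc⟩ := h1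
      exact Or.inl ⟨i, ⟨hi, a, hai, ha, hxa⟩, g.hex_y hi ha hai hxa hyV hyl hc⟩
    by_cases h2 : ∃ i, i ≠ p ∧ i ≠ q ∧ b.coord i y ≠ 0
    · obtain ⟨i, hip, hiq, hc⟩ := h2
      have hin : ¬ Hx V b W i := fun h => h1 ⟨i, h, hc⟩
      obtain ⟨l, hl, hy1, hl1, hlk⟩ := g.nonhx_y (hS i hip hiq) hin hyV hyl hc
      exfalso
      by_cases hlp : l = p
      · subst hlp; omega
      by_cases hlq : l = q
      · subst hlq; omega
      exact hl (hS l hlp hlq)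
    · push Not at h2
      right
      have hyb : ∀ i, y ≠ b i := by
        rintro i rfl; rw [lev_basis] at hyl; norm_num at hyl
      have hyn : ∀ i, y ≠ nv V b i := by
        rintro i rfl; rw [g.lev0] at hyl; norm_num at hyl
      have h3 : b.coord p y + b.coord q y = -1 := by
        rw [lev_apply, ← Finset.add_sum_erase _ _ (Finset.mem_univ p),
          ← Finset.add_sum_erase _ _ (Finset.mem_erase.2 ⟨hpq.symm, Finset.mem_univ q⟩),
          Finset.sum_eq_zero] at hyl
        · linarith
        · intro i hi
          simp only [Finset.mem_erase] at hi
          exact h2 i hi.2.1 hi.1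
      have h4 := (hp4 y hyV (hyb p) (hyn p)).2 hyl
      have h5 := (hq4 y hyV (hyb q) (hyn q)).2 hyl
      rw [hkp] at h4
      rw [hkq] at h5
      push_cast at h4 h5
      have h6 : b.coord p y = -1/2 := by
        rcases h4 with h4 | h4 <;> rcases h5 with h5 | h5 <;> linarith
      have h7 : b.coord q y = -1/2 := by linarith
      apply coord_ext b
      intro i
      rw [map_smul, map_add, smul_eq_mul]
      by_cases hip : i = p
      · rw [hip, h6, coord_self, coord_ne b hpq.symm]; norm_num
      by_cases hiq : i = q
      · rw [hiq, h7, coord_self, coord_ne b hpq]; norm_num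
      rw [h2 i hip hiq, coord_ne b (Ne.symm hip), coord_ne b (Ne.symm hiq)]; norm_num
  have hYc := g.Y_card
  have hVc := g.ff.H.card
  have hsub : Yf V b ⊆ (hxF V b W).image (fun i => - b i) ∪ {(-1/2 : ℝ) • (b p + b q)} := by
    intro y hy
    simp only [Finset.mem_image, Finset.mem_union, Finset.mem_singleton]
    rcases hY y hy with ⟨i, hi, h⟩ | h
    · exact Or.inl ⟨i, mem_hxF.2 hi, h.symm⟩
    · exact Or.inr h
  have h1 := (Finset.card_le_card hsub).trans
    ((Finset.card_union_le _ _).trans (Nat.add_le_add_right Finset.card_image_le _))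
  rw [Finset.card_singleton] at h1
  obtain ⟨h2, h3⟩ := hx_card_le hpq hpn hqn
  have hall := h3 (by omega)
  have hmem : (-1/2 : ℝ) • (b p + b q) ∈ V := by
    by_contra hc
    have hsub : Yf V b ⊆ (hxF V b W).image (fun i => - b i) := by
      intro y hy
      simp only [Finset.mem_image]
      rcases hY y hy with ⟨i, hi, h⟩ | h
      · exact ⟨i, mem_hxF.2 hi, h.symm⟩
      · exfalso; apply hc; rw [← h]; exact (mem_Yf.1 hy).1
    have h1 := (Finset.card_le_card hsub).trans Finset.card_image_le
    omega
  refine g.out hpq hpn hqn hall ?_ ?_ ?_ ?_ ?_ ?_ ?_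
  · rintro w (rfl | rfl | rfl | rfl | rfl)
    · exact g.ff.F.mem p
    · exact g.ff.F.mem q
    · rw [← hxp]; exact nv_mem g.ff p
    · rw [← hxq]; exact nv_mem g.ff q
    · exact hmem
  · simp
  · simp
  · rw [hxp]; simp
  · rw [hxq]; simp
  · intro y h h'; exact absurd h h'
  · intro y hy
    rcases hY y hy with ⟨i, hi, h⟩ | h
    · right
      exact ⟨i, fun h => hpn (h ▸ hi), fun h => hqn (h ▸ hi), h⟩
    · left; rw [h]; simp

end caseA

section caseC
variable {d : ℕ} {V V' : Finset (Fin d → ℝ)} {b : Module.Basis (Fin d) ℝ (Fin d → ℝ)}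
  {z : Fin d → ℝ}

open Classical in
/-- the case of vanishing vertex sum with a vertex of level -2 -/
structure CC (V : Finset (Fin d → ℝ)) (z : Fin d → ℝ)
    (b : Module.Basis (Fin d) ℝ (Fin d → ℝ)) : Prop where
  s0 : ∑ w ∈ V, w = 0
  hz : z ∈ V
  g : Gd V (V.erase z) (-z) 2 b

open Classical in
lemma setupC (s0 : ∑ w ∈ V, w = 0) (hz : z ∈ V) : Setup V (V.erase z) (-z) 2 where
  sub := Finset.erase_subset _ _
  sum := by
    have := Finset.add_sum_erase V (fun w => w) hz
    rw [s0] at this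
    exact eq_neg_of_add_eq_zero_right this
  le := by
    intro b hb
    have := (type0 hb s0).2.1 z hz
    rw [map_neg]; linarith
  good := by
    intro b hb h
    rw [map_neg] at h
    have hl : lev b z < -1 := by linarith
    obtain ⟨h1, h2⟩ := (type0 hb s0).2.2.1 z hz hl
    refine ⟨h1, ?_, ?_⟩
    · intro w hw
      rw [Finset.mem_erase] at hw
      exact h2 w hw.2 hw.1
    · intro w hw hw'
      have : w = z := by
        by_contra hc; exact hw' (Finset.mem_erase.2 ⟨hc, hw⟩)
      rw [this]; exact hl

lemma CC.ff (c : CC V z b) : FF V b := c.g.ff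

lemma CC.levz (c : CC V z b) : lev b z = -2 := by
  have := c.g.lv
  rw [map_neg] at this; linarith

lemma CC.eqz (c : CC V z b) {w : Fin d → ℝ} (hw : w ∈ V) (h : lev b w < -1) : w = z := by
  by_contra hc
  have := c.g.ge (w := w) (Finset.mem_erase.2 ⟨hc, hw⟩)
  linarith

lemma CC.zle (c : CC V z b) (i : Fin d) : b.coord i z ≤ 0 := by
  have := c.g.W_nonneg i
  rw [map_neg] at this; linarith

lemma CC.W0 {i : Fin d} : b.coord i (-z) = 0 ↔ b.coord i z = 0 := by
  rw [map_neg, neg_eq_zero]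

lemma CC.k2 (c : CC V z b) {a : Fin d} (hk : kk V b a ≠ 1) :
    kk V b a = 2 ∧ (∀ w ∈ V, -1 ≤ lev (nbr V b a) w) ∧
    (∀ i, i ≠ a → lev (nbr V b a) (nv V (nbr V b a) i) = 0) ∧
    (∀ i, i ≠ a → ∀ j, j ≠ i → 0 ≤ (nbr V b a).coord j (nv V (nbr V b a) i)) ∧
    (∀ w ∈ V, lev (nbr V b a) w = 0 → ∃ i, i ≠ a ∧ w = nv V (nbr V b a) i) := by
  have hb' := nbr_FF c.ff a
  obtain ⟨h1, _, _, h4⟩ := type0 hb' c.s0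
  have h5 := h4.resolve_left (fun h => hk (kk_one_of_card c.ff h))
  refine ⟨?_, h5, Zf_almost hb' h1 (fun h => hk (kk_one_of_lev c.ff h))⟩
  have h6 := h5 (b a) (c.ff.F.mem a)
  rw [lev_nbr c.ff, lev_basis, coord_self] at h6
  have h7 : kk V b a ≤ 2 := by
    have : (kk V b a : ℝ) ≤ 2 := by linarith
    exact_mod_cast this
  have := kk_pos c.ff a
  omega

lemma CC.selfk2 (c : CC V z b) {a : Fin d} (hk : kk V b a = 2) :
    b.coord a (nv V b a) = -1/2 := by
  have := c.g.self a
  rw [hk] at this; push_cast at this; linarith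

lemma single_neg_ge (hb : FF V b) {n : Fin d → ℝ} (hn : n ∈ V) (h0 : lev b n = 0)
    {i : Fin d} (hi : b.coord i n < 0) : -1 ≤ b.coord i n := by
  have h1 := (lev_zero_neg hb i hn h0 hi).2
  have hk := kk_posR hb i
  nlinarith

lemma CC.z_half (c : CC V z b) {a : Fin d} (hk : kk V b a = 2) : b.coord a z = -1/2 := by
  classical
  obtain ⟨_, h2, h3, h4, h5⟩ := c.k2 (a := a) (by omega)
  have hb' := nbr_FF c.ff a
  have hne : b.coord a z ≠ 0 := by
    intro h
    have := c.g.k1 (CC.W0.2 h)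
    omega
  have hlt : b.coord a z < 0 := lt_of_le_of_ne (c.zle a) hne
  obtain ⟨e, he⟩ := kk_int c.ff a (c.ff.H.lat z c.hz)
  rw [hk] at he
  push_cast at he
  have he0 : e < 0 := by
    have : (e:ℝ) < 0 := by linarith
    exact_mod_cast this
  have hle := nbr_le c.ff a c.hz
  rw [hk, c.levz] at hle
  push_cast at hle
  have he3 : -3 ≤ e := by
    have : (-3:ℝ) ≤ e := by linarith
    exact_mod_cast this
  have hcases : e = -3 ∨ e = -2 ∨ e = -1 := by omega
  rcases hcases with rfl | rfl | rfl
  · exfalso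
    have := nbr_eq' c.ff a c.hz (by rw [hk, c.levz]; push_cast at he ⊢; linarith)
      (by rw [c.levz]; norm_num)
    have h6 := c.levz
    rw [this, c.g.lev0] at h6
    norm_num at h6
  · exfalso
    push_cast at he
    have hl0 : lev (nbr V b a) z = 0 := by
      rw [lev_nbr c.ff, hk, c.levz]; push_cast; linarith
    obtain ⟨i, hia, hi⟩ := h5 z c.hz hl0
    have h6 : (nbr V b a).coord a z = 2 := by
      rw [nbr_coord_self c.ff, c.selfk2 hk]
      have : b.coord a z = -1 := by linarith
      rw [this]; norm_num
    have h7 : (nbr V b a).coord i z < 0 := by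
      have := nv_neg hb' i
      rwa [← hi] at this
    have h8 := single_neg_ge hb' c.hz hl0 h7
    have h9 := hl0
    rw [lev_apply, ← Finset.add_sum_erase _ _ (Finset.mem_univ i)] at h9
    have h10 := Finset.single_le_sum (s := Finset.univ.erase i)
      (f := fun l => (nbr V b a).coord l z)
      (fun l hl => by
        have := h4 i hia l (Finset.mem_erase.1 hl).1
        rwa [← hi] at this) (Finset.mem_erase.2 ⟨hia.symm, Finset.mem_univ a⟩)
    linarith
  · push_cast at he; linarith

lemma CC.k2_x (c : CC V z b) {a : Fin d} (hk : kk V b a = 2) :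
    ∃ e, e ≠ a ∧ kk V b e = 2 ∧ nv V b a = (1/2 : ℝ) • (b e - b a) := by
  classical
  have h1 := c.selfk2 hk
  have hs := c.g.sum0 a
  rw [← Finset.add_sum_erase _ _ (Finset.mem_univ a), h1] at hs
  have hle : ∀ i, i ≠ a → b.coord i (nv V b a) ≤ 1/2 := by
    intro i hi
    have := Finset.single_le_sum (s := Finset.univ.erase a) (f := fun l => b.coord l (nv V b a))
      (fun l hl => c.g.nn (Finset.mem_erase.1 hl).1) (Finset.mem_erase.2 ⟨hi, Finset.mem_univ i⟩)
    linarith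
  obtain ⟨e, hea, he⟩ : ∃ e, e ≠ a ∧ b.coord e (nv V b a) ≠ 0 := by
    by_contra hc
    push Not at hc
    rw [Finset.sum_eq_zero (fun l hl => hc l (Finset.mem_erase.1 hl).1)] at hs
    norm_num at hs
  have hpos : 0 < b.coord e (nv V b a) := lt_of_le_of_ne (c.g.nn hea) (Ne.symm he)
  have hle' := hle e hea
  obtain ⟨n, hn⟩ := kk_int c.ff e (c.ff.H.lat _ (nv_mem c.ff a))
  have hke : kk V b e = 2 := by
    by_contra hc
    have h1 : kk V b e = 1 := by
      by_contra h; exact hc (c.k2 h).1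
    rw [h1] at hn
    push_cast at hn
    rw [one_mul] at hn
    rw [hn] at hpos hle'
    have : 0 < n := by exact_mod_cast hpos
    have : (1:ℝ) ≤ n := by exact_mod_cast this
    linarith
  rw [hke] at hn
  push_cast at hn
  have hval : b.coord e (nv V b a) = 1/2 := by
    have : (0:ℝ) < n := by linarith
    have : 0 < n := by exact_mod_cast this
    have : (1:ℝ) ≤ n := by exact_mod_cast this
    linarith
  rw [← Finset.add_sum_erase _ _ (Finset.mem_erase.2 ⟨hea, Finset.mem_univ e⟩), hval] at hs
  have h0 : ∑ l ∈ (Finset.univ.erase a).erase e, b.coord l (nv V b a) = 0 := by linarith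
  rw [Finset.sum_eq_zero_iff_of_nonneg
    (fun l hl => c.g.nn (Finset.mem_erase.1 (Finset.mem_erase.1 hl).2).1)] at h0
  refine ⟨e, hea, hke, ?_⟩
  apply coord_ext b
  intro i
  rw [map_smul, map_sub, smul_eq_mul]
  by_cases hip : i = a
  · rw [hip, h1, coord_self, coord_ne b hea]; norm_num
  by_cases hiq : i = e
  · rw [hiq, hval, coord_self, coord_ne b hea.symm]; norm_num
  rw [h0 i (by simp [hip, hiq]), coord_ne b (Ne.symm hip), coord_ne b (Ne.symm hiq)]; norm_num

/-- the new vertices of the neighbouring facet at an index with `k = 2` -/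
lemma CC.k2_n (c : CC V z b) {a i : Fin d} (hk : kk V b a = 2) (hia : i ≠ a) :
    (nv V (nbr V b a) i = nv V b i ∧ b.coord a (nv V b i) = 0) ∨
    (lev b (nv V (nbr V b a) i) = -1 ∧ b.coord a (nv V (nbr V b a) i) = -1/2) := by
  obtain ⟨_, h2, h3, h4, h5⟩ := c.k2 (a := a) (by omega)
  have hb' := nbr_FF c.ff a
  have hm := nv_mem hb' i
  have h6 := h3 i hia
  have h7 := h4 i hia a hia.symm
  have h8 := nv_neg hb' i
  set n := nv V (nbr V b a) i with hn
  rw [nbr_coord_self c.ff, c.selfk2 hk] at h7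
  rw [nbr_coord_ne c.ff hia] at h8
  rw [lev_nbr c.ff, hk] at h6
  push_cast at h6
  have h9 : b.coord a n ≤ 0 := by
    by_contra hc
    push Not at hc
    have : b.coord a n / (-1/2) < 0 := div_neg_of_pos_of_neg hc (by norm_num)
    linarith
  have h10 := (type0 c.ff c.s0).2.1 n hm
  obtain ⟨k, hk'⟩ := lev_int c.ff hm
  have hk0 : k ≤ 0 := by
    have : (k:ℝ) ≤ 0 := by rw [← hk']; linarith
    exact_mod_cast this
  have hk2 : -2 ≤ k := by
    rw [hk'] at h10; exact_mod_cast h10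
  have hcases : k = -2 ∨ k = -1 ∨ k = 0 := by omega
  rcases hcases with rfl | rfl | rfl
  · exfalso
    push_cast at hk'
    have hz := c.eqz hm (by rw [hk']; norm_num)
    have := c.z_half hk
    rw [hz] at h6
    rw [this, c.levz] at h6
    norm_num at h6
  · right
    push_cast at hk'
    exact ⟨hk', by linarith⟩
  · left
    push_cast at hk'
    have ha : b.coord a n = 0 := by linarith
    rw [ha] at h8
    have h11 := (lev_zero_neg c.ff i hm hk' (by simpa using h8)).1
    rw [← h11]
    exact ⟨rfl, ha⟩

lemma CC.k2_zero (c : CC V z b) {a e i : Fin d} (hk : kk V b a = 2) (hea : e ≠ a)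
    (hke : kk V b e = 2) (hx : nv V b a = (1/2 : ℝ) • (b e - b a)) (hia : i ≠ a) (hie : i ≠ e) :
    b.coord a (nv V b i) = 0 := by
  rcases c.k2_n hk hia with h | ⟨h1, h2⟩
  · exact h.2
  · exfalso
    obtain ⟨_, _, _, h4, _⟩ := c.k2 (a := a) (by omega)
    have h5 := h4 i hia e hie.symm
    have h6 := (c.k2 (a := e) (by omega)).2.1 _ (nv_mem (nbr_FF c.ff a) i)
    rw [lev_nbr c.ff, hke, h1] at h6
    rw [nbr_coord_ne c.ff hea, h2, c.selfk2 hk, hx, map_smul, map_sub, coord_self,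
      coord_ne b hea.symm] at h5
    push_cast at h6
    norm_num at h5
    rw [← Module.Basis.coord_apply] at h5
    linarith

lemma CC.k_one (c : CC V z b) (a : Fin d) : kk V b a = 1 := by
  classical
  by_contra hk1
  have hk := (c.k2 hk1).1
  obtain ⟨e, hea, hke, hx⟩ := c.k2_x hk
  have hxe : nv V b e = (1/2 : ℝ) • (b a - b e) := by
    obtain ⟨a', ha', hka', hx'⟩ := c.k2_x hke
    have : a = a' := by
      by_contra hne
      have := c.k2_zero hke ha' hka' hx' hea.symm hne
      rw [hx, map_smul, map_sub, coord_self, coord_ne b hea.symm] at this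
      norm_num at this
    rw [this]; exact hx'
  obtain ⟨_, h2, h3, h4, _⟩ := c.k2 hk1
  have hb' := nbr_FF c.ff a
  have hm := nv_mem hb' e
  have hneg := nv_neg hb' e
  have hl0 := h3 e hea
  have hae : b.coord a (nv V b e) = 1/2 := by
    rw [hxe, map_smul, map_sub, coord_self, coord_ne b hea]; norm_num
  obtain ⟨h5, h6⟩ := (c.k2_n hk hea).resolve_left (fun h => by
    have := h.2; rw [hae] at this; norm_num at this)
  have hge := single_neg_ge hb' hm hl0 hneg
  have hkk := (lev_zero_neg hb' e hm hl0 hneg).2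
  have hnn := h4 e hea
  set n := nv V (nbr V b a) e with hn
  have h7 : (nbr V b a).coord a n = 1 := by
    rw [nbr_coord_self c.ff, h6, c.selfk2 hk]; norm_num
  have hs := hl0
  rw [lev_apply, ← Finset.add_sum_erase _ _ (Finset.mem_univ e),
    ← Finset.add_sum_erase _ _ (Finset.mem_erase.2 ⟨hea.symm, Finset.mem_univ a⟩), h7] at hs
  have hnn' : ∀ l ∈ (Finset.univ.erase e).erase a, 0 ≤ (nbr V b a).coord l n := fun l hl =>
    hnn l (Finset.mem_erase.1 (Finset.mem_erase.1 hl).2).1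
  have h8 := Finset.sum_nonneg hnn'
  have h9 : (nbr V b a).coord e n = -1 := by linarith
  have h10 : ∑ l ∈ (Finset.univ.erase e).erase a, (nbr V b a).coord l n = 0 := by linarith
  rw [Finset.sum_eq_zero_iff_of_nonneg hnn'] at h10
  have hk' : kk V (nbr V b a) e = 1 := by
    rw [h9] at hkk
    have : (kk V (nbr V b a) e : ℝ) = 1 := by linarith
    exact_mod_cast this
  -- coordinates after two steps
  have hb2 := nbr_FF hb' e
  have hce : ∀ w, (nbr V b a).coord e w = b.coord e w + b.coord a w := by
    intro w
    rw [nbr_coord_ne c.ff hea, c.selfk2 hk, hx, map_smul, map_sub, coord_self,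
      coord_ne b hea.symm, smul_eq_mul]
    ring
  have hcj : ∀ j, j ≠ a → j ≠ e → ∀ w, (nbr V (nbr V b a) e).coord j w = b.coord j w := by
    intro j hja hje w
    rw [nbr_coord_ne hb' hje, ← hn, h10 j (by simp [hja, hje]), nbr_coord_ne c.ff hja, hx,
      map_smul, map_sub, coord_ne b hja.symm, coord_ne b hje.symm]
    simp
  have hl2 : ∀ w, lev (nbr V (nbr V b a) e) w = lev b w - 2 * b.coord a w -
      (b.coord e w + b.coord a w) := by
    intro w
    rw [lev_nbr hb', lev_nbr c.ff, hk', hk, hce]; push_cast; ring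
  have hza := c.z_half hk
  have hze := c.z_half hke
  have hz0 : ∀ j, j ≠ a → j ≠ e → b.coord j z = 0 := by
    intro j hja hje
    by_contra hc
    have hjz : b.coord j z < 0 := lt_of_le_of_ne (c.zle j) hc
    have hz1 := (lev_zero_neg hb2 j c.hz (by rw [hl2, c.levz, hza, hze]; norm_num)
      (by rw [hcj j hja hje]; exact hjz)).1
    have hj1 : b.coord a (nv V b j) = 0 := c.k2_zero hk hea hke hx hja hje
    have hj2 : b.coord e (nv V b j) = 0 := c.k2_zero hke hea.symm hk hxe hje hja
    have hx1 := (lev_zero_neg hb2 j (nv_mem c.ff j) (by rw [hl2, c.g.lev0, hj1, hj2]; norm_num)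
      (by rw [hcj j hja hje]; exact nv_neg c.ff j)).1
    have h11 := c.levz
    rw [hz1, ← hx1, c.g.lev0] at h11
    norm_num at h11
  have hl := c.levz
  rw [lev_apply, ← Finset.add_sum_erase _ _ (Finset.mem_univ e),
    ← Finset.add_sum_erase _ _ (Finset.mem_erase.2 ⟨hea.symm, Finset.mem_univ a⟩), hza, hze,
    Finset.sum_eq_zero (fun l hl => by
      simp only [Finset.mem_erase] at hl
      exact hz0 l hl.1 hl.2.1)] at hl
  norm_num at hl

end caseC

section caseC2
variable {d : ℕ} {V V' : Finset (Fin d → ℝ)} {b : Module.Basis (Fin d) ℝ (Fin d → ℝ)}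
  {z : Fin d → ℝ}

lemma CC.cint (c : CC V z b) (i : Fin d) {x : Fin d → ℝ} (hx : IsLP x) :
    ∃ n : ℤ, b.coord i x = n := by
  obtain ⟨n, hn⟩ := kk_int c.ff i hx
  rw [c.k_one i] at hn
  exact ⟨n, by simpa using hn⟩

lemma CC.x_shape (c : CC V z b) (i : Fin d) : ∃ a, a ≠ i ∧ nv V b i = b a - b i := by
  classical
  obtain ⟨a, hai, ha⟩ : ∃ a, a ≠ i ∧ b.coord a (nv V b i) ≠ 0 := by
    by_contra hc
    push Not at hc
    have h1 := c.g.sum0 i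
    rw [← Finset.add_sum_erase _ _ (Finset.mem_univ i), Finset.sum_eq_zero] at h1
    · have := nv_neg c.ff i; linarith
    · intro a ha
      exact hc a (Finset.mem_erase.1 ha).1
  have hpos : 0 < b.coord a (nv V b i) := lt_of_le_of_ne (c.g.nn hai) (Ne.symm ha)
  obtain ⟨n, hn⟩ := c.cint a (c.ff.H.lat _ (nv_mem c.ff i))
  have h1 : 1 ≤ b.coord a (nv V b i) := by
    rw [hn] at hpos ⊢
    have : 0 < n := by exact_mod_cast hpos
    exact_mod_cast this
  exact ⟨a, hai, (c.g.shape hai h1).1⟩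

lemma isLP_neg {x : Fin d → ℝ} (h : IsLP x) : IsLP (-x) := by
  intro i
  obtain ⟨n, hn⟩ := h i
  exact ⟨-n, by simp [hn]⟩

lemma lev_pos_of_cone (hb : FF V b) {x : Fin d → ℝ} (hx : IsLP x) (hx0 : x ≠ 0)
    (h : ∀ i, 0 ≤ b.coord i x) : 1 ≤ lev b x := by
  obtain ⟨n, hn⟩ := hb.F.int x hx
  have h0 : 0 ≤ lev b x := by
    rw [lev_apply]; exact Finset.sum_nonneg (fun i _ => h i)
  have hne : lev b x ≠ 0 := by
    intro h1
    rw [lev_apply, Finset.sum_eq_zero_iff_of_nonneg (fun i _ => h i)] at h1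
    apply hx0
    apply coord_ext b
    intro i
    rw [h1 i (Finset.mem_univ i), map_zero]
  rw [hn] at h0 hne ⊢
  have h1 : 0 ≤ n := by exact_mod_cast h0
  have h2 : n ≠ 0 := by intro h; apply hne; rw [h]; simp
  have h3 : 1 ≤ n := by omega
  exact_mod_cast h3

lemma CC.z_ge (c : CC V z b) (p : Fin d) : b.coord p z = 0 ∨ b.coord p z = -1 := by
  classical
  obtain ⟨n, hn⟩ := c.cint p (c.ff.H.lat _ c.hz)
  have h1 := c.zle p
  have hl := c.levz
  rw [lev_apply, ← Finset.add_sum_erase _ _ (Finset.mem_univ p)] at hl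
  have h2 : ∑ i ∈ Finset.univ.erase p, b.coord i z ≤ 0 :=
    Finset.sum_nonpos (fun i _ => c.zle i)
  by_cases h3 : b.coord p z ≤ -2
  · exfalso
    have h4 : n = -2 ∨ n < -2 := by
      have : n ≤ -2 := by rw [hn] at h3; exact_mod_cast h3
      omega
    have h5 : (-2 : ℝ) ≤ b.coord p z ∨ b.coord p z < -2 := le_or_gt _ _
    -- z = -t b_p with t at least 2
    obtain ⟨b', hb', hc⟩ := exists_cone c.ff.H (- b p)
    have hlp : IsLP (- b p) := isLP_neg (c.ff.H.lat _ (c.ff.F.mem p))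
    have h6 := lev_pos_of_cone hb' hlp (by simpa using b.ne_zero p) hc
    have h7 := c.g.W_nonneg
    -- level of z in b'
    have hz : z = ∑ i, b.coord i z • b i := by
      have := b.sum_repr z
      exact this.symm
    by_cases h8 : b.coord p z = -2
    · have h9 : ∑ i ∈ Finset.univ.erase p, b.coord i z = 0 := by linarith
      rw [Finset.sum_eq_zero_iff_of_nonpos (fun i _ => c.zle i)] at h9
      have h10 : z = (2:ℝ) • (- b p) := by
        apply coord_ext b
        intro i
        rw [map_smul, map_neg, smul_eq_mul]
        by_cases hi : i = p
        · rw [hi, h8, coord_self]; norm_num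
        · rw [h9 i (by simp [hi]), coord_ne b (Ne.symm hi)]; norm_num
      have h11 := hb'.F.le z c.hz
      rw [h10, map_smul, smul_eq_mul] at h11
      linarith
    · have h9 : b.coord p z < -2 := lt_of_le_of_ne h3 h8
      have h10 := nbr_le c.ff p c.hz
      rw [c.k_one, c.levz] at h10
      push_cast at h10
      have h11 : b.coord p z = -3 := by
        have : n < -2 := by rw [hn] at h9; exact_mod_cast h9
        have h12 : -3 ≤ n := by
          have : (-3:ℝ) ≤ n := by rw [← hn]; linarith
          exact_mod_cast this
        have : n = -3 := by omega
        rw [hn, this]; norm_num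
      have := nbr_eq' c.ff p c.hz (by rw [c.k_one, c.levz, h11]; norm_num)
        (by rw [c.levz]; norm_num)
      have h13 := c.levz
      rw [this, c.g.lev0] at h13
      norm_num at h13
  · push Not at h3
    rw [hn] at h1 h3 ⊢
    have h4 : n ≤ 0 := by exact_mod_cast h1
    have h5 : -2 < n := by exact_mod_cast h3
    have h6 : n = 0 ∨ n = -1 := by omega
    rcases h6 with rfl | rfl
    · left; simp
    · right; simp

lemma CC.exists_pq (c : CC V z b) : ∃ p q, p ≠ q ∧ z = - b p - b q := by
  classical
  have hl := c.levz
  obtain ⟨p, hp⟩ : ∃ p, b.coord p z = -1 := by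
    by_contra hc
    push Not at hc
    rw [lev_apply, Finset.sum_eq_zero (fun i _ => (c.z_ge i).resolve_right (hc i))] at hl
    norm_num at hl
  rw [lev_apply, ← Finset.add_sum_erase _ _ (Finset.mem_univ p), hp] at hl
  obtain ⟨q, hqp, hq⟩ : ∃ q, q ≠ p ∧ b.coord q z = -1 := by
    by_contra hc
    push Not at hc
    rw [Finset.sum_eq_zero (fun i hi =>
      (c.z_ge i).resolve_right (hc i (Finset.mem_erase.1 hi).1))] at hl
    norm_num at hl
  rw [← Finset.add_sum_erase _ _ (Finset.mem_erase.2 ⟨hqp, Finset.mem_univ q⟩), hq] at hl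
  have h0 : ∑ i ∈ (Finset.univ.erase p).erase q, b.coord i z = 0 := by linarith
  rw [Finset.sum_eq_zero_iff_of_nonpos (fun i _ => c.zle i)] at h0
  refine ⟨p, q, hqp.symm, ?_⟩
  apply coord_ext b
  intro i
  rw [map_sub, map_neg]
  by_cases hip : i = p
  · rw [hip, hp, coord_self, coord_ne b hqp]; norm_num
  by_cases hiq : i = q
  · rw [hiq, hq, coord_self, coord_ne b hqp.symm]; norm_num
  rw [h0 i (by simp [hip, hiq]), coord_ne b (Ne.symm hip), coord_ne b (Ne.symm hiq)]; norm_num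

lemma nb_self (hb : FF V b) {p a : Fin d} (hap : a ≠ p) (hx : nv V b p = b a - b p)
    (w : Fin d → ℝ) : (nbr V b p).coord p w = - b.coord p w := by
  rw [nbr_coord_self hb, hx, map_sub, coord_self, coord_ne b hap]; ring

lemma nb_ne (hb : FF V b) {p a l : Fin d} (hap : a ≠ p) (hlp : l ≠ p)
    (hx : nv V b p = b a - b p) (w : Fin d → ℝ) :
    (nbr V b p).coord l w = b.coord l w + (if a = l then 1 else 0) * b.coord p w := by
  rw [nbr_coord_ne hb hlp, hx, map_sub, map_sub, coord_self, coord_ne b hap, coord_ne b hlp.symm,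
    bc]; ring

/-- if `x_p = b_q - b_p` then special relation determines z -/
lemma CC.rel (c : CC V z b) {p q : Fin d} (hpq : p ≠ q) (hz : z = - b p - b q)
    (hx : nv V b p = b q - b p) {w : Fin d → ℝ} (hw : w ∈ V)
    (h1 : lev b w - 2 * b.coord p w - b.coord q w = 1) (h2 : lev b w - b.coord p w < 1) :
    w = z := by
  have hb' := nbr_FF c.ff p
  have hq : ∀ w, (nbr V b p).coord q w = b.coord q w + b.coord p w := by
    intro w
    rw [nb_ne c.ff hpq.symm hpq.symm hx]; simp
  have hl : ∀ w, lev (nbr V b p) w = lev b w - b.coord p w := by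
    intro w
    rw [lev_nbr c.ff, c.k_one]; simp
  have hzp : b.coord p z = -1 := by
    rw [hz, map_sub, map_neg, coord_self, coord_ne b hpq.symm]; norm_num
  have hzq : b.coord q z = -1 := by
    rw [hz, map_sub, map_neg, coord_self, coord_ne b hpq]; norm_num
  have hk := kk_pos hb' q
  have hk1 : kk V (nbr V b p) q = 1 := by
    have := nbr_le hb' q c.hz
    rw [hl, hq, c.levz, hzp, hzq] at this
    have : (kk V (nbr V b p) q : ℝ) ≤ 1 := by linarith
    have : kk V (nbr V b p) q ≤ 1 := by exact_mod_cast this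
    omega
  have e1 := nbr_eq' hb' q c.hz (by rw [hl, hq, hk1, c.levz, hzp, hzq]; norm_num)
    (by rw [hl, c.levz, hzp]; norm_num)
  have e2 := nbr_eq' hb' q hw (by rw [hl, hq, hk1]; push_cast; linarith)
    (by rw [hl]; exact h2)
  rw [e1, e2]

lemma CC.rel_x (c : CC V z b) {p q : Fin d} (hpq : p ≠ q) (hz : z = - b p - b q)
    (hx : nv V b p = b q - b p) : nv V b q = b p - b q := by
  obtain ⟨a, haq, ha⟩ := c.x_shape q
  by_cases hap : a = p
  · rw [ha, hap]
  · exfalso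
    have h1 : b.coord p (nv V b q) = 0 := by
      rw [ha, map_sub, coord_ne b hap, coord_ne b hpq.symm]; norm_num
    have h2 : b.coord q (nv V b q) = -1 := c.g.selfk1 (c.k_one q)
    have := c.rel hpq hz hx (nv_mem c.ff q) (by rw [c.g.lev0, h1, h2]; norm_num)
      (by rw [c.g.lev0, h1]; norm_num)
    have h3 := c.levz
    rw [← this, c.g.lev0] at h3
    norm_num at h3

lemma CC.rel_neg (c : CC V z b) {p q : Fin d} (hpq : p ≠ q) (hz : z = - b p - b q)
    (hx : nv V b p = b q - b p) : - b p ∉ V := by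
  intro hm
  have := c.rel hpq hz hx hm
    (by rw [map_neg, map_neg, map_neg, lev_basis, coord_self, coord_ne b hpq]; norm_num)
    (by rw [map_neg, map_neg, lev_basis, coord_self]; norm_num)
  have h3 := c.levz
  rw [← this, map_neg, lev_basis] at h3
  norm_num at h3

lemma CC.y_ge (c : CC V z b) {y : Fin d → ℝ} (hy : y ∈ V) (hl : lev b y = -1) (p : Fin d) :
    -1 ≤ b.coord p y := by
  obtain ⟨n, hn⟩ := c.cint p (c.ff.H.lat _ hy)
  have h1 := nbr_le c.ff p hy
  rw [hl, c.k_one, hn] at h1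
  push_cast at h1
  have h2 : n ≠ -2 := by
    rintro rfl
    have := nbr_eq' c.ff p hy (by rw [hl, c.k_one, hn]; norm_num) (by rw [hl]; norm_num)
    rw [this, c.g.lev0] at hl
    norm_num at hl
  have h3 : -2 ≤ n := by
    have : (-2:ℝ) ≤ n := by linarith
    exact_mod_cast this
  have : -1 ≤ n := by omega
  rw [hn]; exact_mod_cast this

lemma caseC1 (c : CC V z b) {p q : Fin d} (hpq : p ≠ q) (hz : z = - b p - b q)
    (hxp : nv V b p = b q - b p) :
    Out V b p q {b p, b q, b q - b p, b p - b q, - b p - b q} := by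
  classical
  have hz' : z = - b q - b p := by rw [hz]; abel
  have hxq := c.rel_x hpq hz hxp
  have hnp := c.rel_neg hpq hz hxp
  have hnq := c.rel_neg hpq.symm hz' hxq
  have g := c.g
  have hzp : b.coord p z = -1 := by
    rw [hz, map_sub, map_neg, coord_self, coord_ne b hpq.symm]; norm_num
  have hzq : b.coord q z = -1 := by
    rw [hz, map_sub, map_neg, coord_self, coord_ne b hpq]; norm_num
  have hS : ∀ i, i ≠ p → i ≠ q → b.coord i (-z) = 0 := by
    intro i hip hiq
    rw [hz, map_neg, map_sub, map_neg, coord_ne b (Ne.symm hip), coord_ne b (Ne.symm hiq)]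
    norm_num
  have hpn : ¬ Hx V b (-z) p := fun h => by
    have := CC.W0.1 h.1; rw [hzp] at this; norm_num at this
  have hqn : ¬ Hx V b (-z) q := fun h => by
    have := CC.W0.1 h.1; rw [hzq] at this; norm_num at this
  have hY : ∀ y ∈ Yf (V.erase z) b, ∃ i, Hx V b (-z) i ∧ y = - b i := by
    intro y hy
    rw [mem_Yf] at hy
    obtain ⟨hyV', hyl⟩ := hy
    have hyV := Finset.mem_of_mem_erase hyV'
    by_cases h1 : ∃ i, Hx V b (-z) i ∧ b.coord i y ≠ 0
    · obtain ⟨i, ⟨hi, a, hai, ha, hxa⟩, hc⟩ := h1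
      exact ⟨i, ⟨hi, a, hai, ha, hxa⟩, g.hex_y hi ha hai hxa hyV hyl hc⟩
    exfalso
    by_cases h2 : ∃ i, i ≠ p ∧ i ≠ q ∧ b.coord i y ≠ 0
    · obtain ⟨i, hip, hiq, hc⟩ := h2
      have hin : ¬ Hx V b (-z) i := fun h => h1 ⟨i, h, hc⟩
      obtain ⟨l, hl, hy1, hl1, hlk⟩ := g.nonhx_y (hS i hip hiq) hin hyV hyl hc
      by_cases hlp : l = p
      · subst hlp
        rw [hxp] at hl1
        exact hiq (b.injective (sub_left_injective hl1)).symm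
      by_cases hlq : l = q
      · subst hlq
        rw [hxq] at hl1
        exact hip (b.injective (sub_left_injective hl1)).symm
      exact hl (hS l hlp hlq)
    · push Not at h2
      have h3 : b.coord p y + b.coord q y = -1 := by
        rw [lev_apply, ← Finset.add_sum_erase _ _ (Finset.mem_univ p),
          ← Finset.add_sum_erase _ _ (Finset.mem_erase.2 ⟨hpq.symm, Finset.mem_univ q⟩),
          Finset.sum_eq_zero] at hyl
        · linarith
        · intro i hi
          simp only [Finset.mem_erase] at hi
          exact h2 i hi.2.1 hi.1
      have h4 := c.y_ge hyV hyl p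
      have h5 := c.y_ge hyV hyl q
      obtain ⟨n, hn⟩ := c.cint p (c.ff.H.lat _ hyV)
      have h6 : n = -1 ∨ n = 0 := by
        have h7 : -1 ≤ n := by rw [hn] at h4; exact_mod_cast h4
        have h8 : n ≤ 0 := by
          have : (n:ℝ) ≤ 0 := by rw [← hn]; linarith
          exact_mod_cast this
        omega
      rcases h6 with rfl | rfl
      · apply hnp
        have : y = - b p := by
          apply coord_ext b
          intro i
          rw [map_neg]
          by_cases hip : i = p
          · rw [hip, hn, coord_self]; norm_num
          by_cases hiq : i = q
          · rw [hiq, coord_ne b hpq]; push_cast at hn; linarith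
          rw [h2 i hip hiq, coord_ne b (Ne.symm hip)]; norm_num
        rw [← this]; exact hyV
      · apply hnq
        have : y = - b q := by
          apply coord_ext b
          intro i
          rw [map_neg]
          by_cases hip : i = p
          · rw [hip, hn, coord_ne b hpq.symm]; norm_num
          by_cases hiq : i = q
          · rw [hiq, coord_self]; push_cast at hn; linarith
          rw [h2 i hip hiq, coord_ne b (Ne.symm hiq)]; norm_num
        rw [← this]; exact hyV
  have hYc := g.Y_card
  have hVc := g.ff.H.card
  rw [Finset.card_erase_of_mem c.hz] at hYc
  have hVpos : 0 < V.card := Finset.card_pos.2 ⟨z, c.hz⟩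
  have hsub : Yf (V.erase z) b ⊆ (hxF V b (-z)).image (fun i => - b i) := by
    intro y hy
    simp only [Finset.mem_image]
    obtain ⟨i, hi, h⟩ := hY y hy
    exact ⟨i, mem_hxF.2 hi, h.symm⟩
  have h1 := (Finset.card_le_card hsub).trans Finset.card_image_le
  obtain ⟨h2, h3⟩ := hx_card_le hpq hpn hqn
  have hall := h3 (by omega)
  refine g.out hpq hpn hqn hall ?_ ?_ ?_ ?_ ?_ ?_ ?_
  · rintro w (rfl | rfl | rfl | rfl | rfl)
    · exact g.ff.F.mem p
    · exact g.ff.F.mem q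
    · rw [← hxp]; exact nv_mem g.ff p
    · rw [← hxq]; exact nv_mem g.ff q
    · rw [← hz]; exact c.hz
  · simp
  · simp
  · rw [hxp]; simp
  · rw [hxq]; simp
  · intro y h h'
    have : y = z := by
      by_contra hc; exact h' (Finset.mem_erase.2 ⟨hc, h⟩)
    rw [this, hz]; simp
  · intro y hy
    obtain ⟨i, hi, h⟩ := hY y hy
    right
    exact ⟨i, fun h => hpn (h ▸ hi), fun h => hqn (h ▸ hi), h⟩

lemma caseC2 (c : CC V z b) {p q i j : Fin d} (hpq : p ≠ q) (hz : z = - b p - b q)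
    (hip : i ≠ p) (hiq : i ≠ q) (hjp : j ≠ p) (hjq : j ≠ q)
    (hxp : nv V b p = b i - b p) (hxq : nv V b q = b j - b q) : False := by
  classical
  have g := c.g
  have hzp : b.coord p z = -1 := by
    rw [hz, map_sub, map_neg, coord_self, coord_ne b hpq.symm]; norm_num
  have hzq : b.coord q z = -1 := by
    rw [hz, map_sub, map_neg, coord_self, coord_ne b hpq]; norm_num
  have hz0 : ∀ i, i ≠ p → i ≠ q → b.coord i z = 0 := by
    intro i hip hiq
    rw [hz, map_sub, map_neg, coord_ne b (Ne.symm hip), coord_ne b (Ne.symm hiq)]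
    norm_num
  have hb' := nbr_FF c.ff p
  have cp' : ∀ w, (nbr V b p).coord p w = - b.coord p w := nb_self c.ff hip hxp
  have cl' : ∀ l, l ≠ p → ∀ w, (nbr V b p).coord l w =
      b.coord l w + (if i = l then 1 else 0) * b.coord p w := fun l hl => nb_ne c.ff hip hl hxp
  have l' : ∀ w, lev (nbr V b p) w = lev b w - b.coord p w := by
    intro w
    rw [lev_nbr c.ff, c.k_one]; simp
  have hxqp : b.coord p (nv V b q) = 0 := by
    rw [hxq, map_sub, coord_ne b hjp, coord_ne b hpq.symm]; norm_num
  have hxqq : b.coord q (nv V b q) = -1 := c.g.selfk1 (c.k_one q)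
  have hq1 : (nbr V b p).coord q (nv V b q) = -1 := by
    rw [cl' q hpq.symm, hxqp, hxqq]; ring
  obtain ⟨hn1, hk1⟩ := lev_zero_neg hb' q (nv_mem c.ff q) (by rw [l', c.g.lev0, hxqp]; norm_num)
    (by rw [hq1]; norm_num)
  rw [hq1] at hk1
  have hkR : (kk V (nbr V b p) q : ℝ) = 1 := by linarith
  have hx2 : nv V (nbr V b p) q = nbr V b p j - nbr V b p q := by
    rw [← hn1, nbr_ne c.ff hjp, nbr_ne c.ff hpq.symm, hxq]
  have hb2 := nbr_FF hb' q
  have cq2 : ∀ w, (nbr V (nbr V b p) q).coord q w = - b.coord q w := by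
    intro w
    rw [nb_self hb' hjq hx2, cl' q hpq.symm, if_neg hiq]; ring
  have cp2 : ∀ w, (nbr V (nbr V b p) q).coord p w = - b.coord p w := by
    intro w
    rw [nb_ne hb' hjq hpq hx2, cp', if_neg hjp]; ring
  have cl2 : ∀ l, l ≠ p → l ≠ q → ∀ w, (nbr V (nbr V b p) q).coord l w =
      b.coord l w + (if i = l then 1 else 0) * b.coord p w +
        (if j = l then 1 else 0) * b.coord q w := by
    intro l hlp hlq w
    rw [nb_ne hb' hjq hlq hx2, cl' l hlp, cl' q hpq.symm, if_neg hiq]; ring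
  have l2 : ∀ w, lev (nbr V (nbr V b p) q) w = lev b w - b.coord p w - b.coord q w := by
    intro w
    rw [lev_nbr hb', hkR, l', cl' q hpq.symm, if_neg hiq]; ring
  have lz2 : lev (nbr V (nbr V b p) q) z = 0 := by rw [l2, c.levz, hzp, hzq]; norm_num
  have cz2 : (nbr V (nbr V b p) q).coord i z = -1 - (if j = i then 1 else 0) := by
    rw [cl2 i hip hiq, hz0 i hip hiq, hzp, hzq, if_pos rfl]; ring
  obtain ⟨hz2, hkz⟩ := lev_zero_neg hb2 i c.hz lz2 (by rw [cz2]; split_ifs <;> norm_num)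
  rw [cz2] at hkz
  have hij : j ≠ i := by
    intro h
    rw [if_pos h] at hkz
    have h1 : (kk V (nbr V (nbr V b p) q) i : ℝ) * 2 = 1 := by linarith
    have : kk V (nbr V (nbr V b p) q) i * 2 = 1 := by exact_mod_cast h1
    omega
  rw [if_neg hij] at hkz cz2
  have hk2R : (kk V (nbr V (nbr V b p) q) i : ℝ) = 1 := by linarith
  -- the vertex y_i
  have hWi : b.coord i (-z) = 0 := CC.W0.2 (hz0 i hip hiq)
  obtain ⟨hy, hyl⟩ := g.t6 hWi hip.symm hxp
  obtain ⟨e, hei, he⟩ := c.x_shape i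
  have hnz : nv V b i - b p ≠ z := by
    intro h
    rw [h, c.levz] at hyl
    norm_num at hyl
  have hep : e = p := by
    by_contra hep
    by_cases heq : e = q
    · subst heq
      apply hnz
      rw [hz2]
      have cyi : b.coord i (nv V b i - b p) = -1 := by
        rw [he, map_sub, map_sub, coord_self, coord_ne b hei, coord_ne b hip.symm]; norm_num
      have cyp : b.coord p (nv V b i - b p) = -1 := by
        rw [he, map_sub, map_sub, coord_self, coord_ne b hep, coord_ne b hip]; norm_num
      have cyq : b.coord e (nv V b i - b p) = 1 := by
        rw [he, map_sub, map_sub, coord_self, coord_ne b hei.symm, coord_ne b hpq]; norm_num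
      refine nbr_eq' hb2 i hy ?_ ?_
      · rw [hk2R, l2, cl2 i hip hiq, hyl, cyi, cyp, cyq, if_neg hij, if_pos rfl]; norm_num
      · rw [l2, hyl, cyp, cyq]; norm_num
    · have hWe : b.coord e (-z) = 0 := CC.W0.2 (hz0 e hep heq)
      have := g.hex_x hWi hWe hei he hip.symm
        (by rw [hxp, map_sub, coord_self, coord_ne b hip.symm]; norm_num)
      exact hep this.symm
  subst hep
  have hyi : nv V b i - b e = - b i := by rw [he]; abel
  rw [hyi] at hy hyl
  have hb3 := nbr_FF hb2 i
  have hc3 := (type0 hb3 c.s0).1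
  have l3 : ∀ w, lev (nbr V (nbr V (nbr V b e) q) i) w = lev (nbr V (nbr V b e) q) w -
      (nbr V (nbr V b e) q).coord i w := by
    intro w; rw [lev_nbr hb2, hk2R]; ring
  have cl3 : ∀ l, l ≠ i → ∀ w, (nbr V (nbr V (nbr V b e) q) i).coord l w =
      (nbr V (nbr V b e) q).coord l w +
        (nbr V (nbr V b e) q).coord l z * (nbr V (nbr V b e) q).coord i w := by
    intro l hl w
    rw [nbr_coord_ne hb2 hl, ← hz2, cz2]; ring
  have ci3 : ∀ w, (nbr V (nbr V (nbr V b e) q) i).coord i w =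
      - (nbr V (nbr V b e) q).coord i w := by
    intro w
    rw [nbr_coord_self hb2, ← hz2, cz2]; ring
  have bi2 : (nbr V (nbr V b e) q).coord i (b i) = 1 := by
    rw [cl2 i hip hiq, coord_self, coord_ne b hip, coord_ne b hiq]; ring
  refine Zf_two hb3 hc3 (w := - b i) (w' := b i) hy (c.ff.F.mem i) ?_ ?_ ?_ hpq hij ?_ ?_ ?_ ?_
  · rw [l3, map_neg, map_neg, bi2, l2, lev_basis, coord_ne b hip, coord_ne b hiq]; norm_num
  · rw [l3, bi2, l2, lev_basis, coord_ne b hip, coord_ne b hiq]; norm_num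
  · intro h
    have := congrArg (lev b) h
    rw [map_neg, lev_basis] at this; norm_num at this
  · rw [map_neg, cl3 e hei, bi2, cp2, cp2, hzp, coord_ne b hip]; norm_num
  · rw [map_neg, cl3 q hiq.symm, bi2, cq2, cq2, hzq, coord_ne b hiq]; norm_num
  · rw [cl3 j hij, bi2, cl2 j hjp hjq, cl2 j hjp hjq, hz0 j hjp hjq, hzp, hzq, coord_ne b hip,
      coord_ne b hiq, coord_ne b (Ne.symm hij), if_neg (Ne.symm hij), if_pos rfl]; norm_num
  · rw [ci3, bi2]; norm_num

lemma caseC (c : CC V z b) : ∃ p q,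
    Out V b p q {b p, b q, b q - b p, b p - b q, - b p - b q} := by
  obtain ⟨p, q, hpq, hz⟩ := c.exists_pq
  have hz' : z = - b q - b p := by rw [hz]; abel
  obtain ⟨i, hip, hi⟩ := c.x_shape p
  obtain ⟨j, hjq, hj⟩ := c.x_shape q
  by_cases hiq : i = q
  · subst hiq; exact ⟨p, i, caseC1 c hpq hz hi⟩
  by_cases hjp : j = p
  · subst hjp; exact ⟨q, j, caseC1 c hpq.symm hz' hj⟩
  exact (caseC2 c hpq hz hip hiq hjp hjq hi hj).elim

end caseC2

section maincomb
variable {d : ℕ} {V : Finset (Fin d → ℝ)}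

/-- combinatorial classification -/
theorem main_comb (hde : Even d) (H : Hyp V) :
    ∃ (b : Module.Basis (Fin d) ℝ (Fin d → ℝ)) (p q : Fin d),
      (kk V b q = 1 ∧ Out V b p q {b p, b q, b q - b p, b p - b q, - b q}) ∨
      (kk V b p = 2 ∧ kk V b q = 2 ∧ Out V b p q {b p, b q, (1/2 : ℝ) • (b q - b p),
        (1/2 : ℝ) • (b p - b q), (-1/2 : ℝ) • (b p + b q)}) ∨
      (kk V b q = 1 ∧ Out V b p q {b p, b q, b q - b p, b p - b q, - b p - b q}) := by
  classical
  by_cases hs : ∑ w ∈ V, w = 0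
  · by_cases hz : ∃ b z, FF V b ∧ z ∈ V ∧ lev b z < -1
    · obtain ⟨b, z, hb, hz, hl⟩ := hz
      have hl2 : lev b z = -2 := by
        have h1 := (type0 hb hs).2.1 z hz
        have h2 := lev_lt hb hz hl
        linarith
      have c : CC V z b := ⟨hs, hz, hb, setupC hs hz, by rw [map_neg, hl2]; norm_num⟩
      obtain ⟨p, q, h⟩ := caseC c
      exact ⟨b, p, q, Or.inr (Or.inr ⟨c.k_one q, h⟩)⟩
    · exfalso
      push Not at hz
      -- centrally symmetric
      have hneg : ∀ w ∈ V, -w ∈ convexHull ℝ (V : Set (Fin d → ℝ)) := by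
        intro w hw
        obtain ⟨b, hb, hc⟩ := exists_cone H (-w)
        have hw0 : w ≠ 0 := fun h => H.zero (h ▸ hw)
        have h1 := lev_pos_of_cone hb (isLP_neg (H.lat w hw)) (by simpa using hw0) hc
        have h2 := hz b w hb hw
        rw [map_neg] at h1
        have h3 : lev b (-w) = 1 := by rw [map_neg]; linarith
        have h4 : -w = ∑ i, b.coord i (-w) • b i := (b.sum_repr (-w)).symm
        rw [h4]
        refine (convex_convexHull ℝ _).sum_mem (fun i _ => hc i) (by rw [← lev_apply]; exact h3) ?_
        intro i _
        exact subset_convexHull ℝ _ (hb.F.mem i)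
      have hsub : ∀ x ∈ convexHull ℝ (V : Set (Fin d → ℝ)),
          -x ∈ convexHull ℝ (V : Set (Fin d → ℝ)) := by
        intro x hx
        have h1 : convexHull ℝ (V : Set (Fin d → ℝ)) ⊆
            (fun x => -x) ⁻¹' (convexHull ℝ (V : Set (Fin d → ℝ))) := by
          apply convexHull_min
          · intro w hw; exact hneg w hw
          · exact (convex_convexHull ℝ _).is_linear_preimage (IsLinearMap.isLinearMap_neg)
        exact h1 hx
      have hVneg : ∀ w ∈ V, -w ∈ V := by
        intro w hw
        have h1 : -w ∈ Set.extremePoints ℝ (convexHull ℝ (V : Set (Fin d → ℝ))) := by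
          have h2 := H.ext w hw
          rw [mem_extremePoints] at h2 ⊢
          refine ⟨hneg w hw, ?_⟩
          intro x1 hx1 x2 hx2 hseg
          have h3 := h2.2 (-x1) (hsub x1 hx1) (-x2) (hsub x2 hx2) (by
            obtain ⟨s, t, hs, ht, hst, h⟩ := hseg
            refine ⟨s, t, hs, ht, hst, ?_⟩
            rw [smul_neg, smul_neg, ← neg_add, h, neg_neg])
          exact ⟨by rw [← h3.1, neg_neg], by rw [← h3.2, neg_neg]⟩
        exact_mod_cast extremePoints_convexHull_subset h1
      have hev : ∑ w ∈ V, (1 : ZMod 2) = 0 := by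
        refine Finset.sum_involution (fun w _ => -w) (fun i hi => by decide) ?_ (fun w hw => hVneg w hw)
          (fun w _ => neg_neg w)
        intro w hw _ h
        apply H.zero
        have h2 : w = 0 := by
          ext i
          have := congrFun h i
          simp at this ⊢
          linarith
        rwa [h2] at hw
      rw [Finset.sum_const, nsmul_eq_mul, mul_one, ZMod.natCast_eq_zero_iff_even] at hev
      obtain ⟨r, hr⟩ := hev
      obtain ⟨r', hr'⟩ := hde
      have := H.card
      omega
  · obtain ⟨b, hb, hc⟩ := exists_cone H (∑ w ∈ V, w)
    have h1 := lev_pos_of_cone hb (isLP_sum V H.lat) hs hc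
    have h2 := sum_lev_le hb
    have hS : Setup V V (∑ w ∈ V, w) 1 :=
      ⟨Finset.Subset.refl _, rfl, fun b hb => sum_lev_le hb,
        fun b hb h => ⟨(typeA hb h).1, (typeA hb h).2, fun w hw hw' => absurd hw hw'⟩⟩
    have g : Gd V V (∑ w ∈ V, w) 1 b := ⟨hb, hS, le_antisymm h2 h1⟩
    obtain ⟨p, hp⟩ : ∃ p, b.coord p (∑ w ∈ V, w) ≠ 0 := by
      by_contra hcon
      push Not at hcon
      apply hs
      apply coord_ext b
      intro i
      rw [hcon i, map_zero]
    by_cases hq : ∃ q, q ≠ p ∧ b.coord q (∑ w ∈ V, w) ≠ 0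
    · obtain ⟨q, hqp, hq⟩ := hq
      obtain ⟨h3, h4, h5⟩ := caseA2 g hqp.symm hp hq
      exact ⟨b, p, q, Or.inr (Or.inl ⟨h3, h4, h5⟩)⟩
    · push Not at hq
      obtain ⟨q, h3, h4⟩ := caseA1 hde g hq hp
      exact ⟨b, p, q, Or.inl ⟨h3, h4⟩⟩

end maincomb

set_option linter.unusedSimpArgs false
section split
variable {d : ℕ} {V : Finset (Fin d → ℝ)} {b : Module.Basis (Fin d) ℝ (Fin d → ℝ)}

lemma pairing {α : Type*} [DecidableEq α] (a0 : α) (σ : α → α) : ∀ (n : ℕ) (s : Finset α),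
    s.card = n → (∀ i ∈ s, σ i ∈ s ∧ σ i ≠ i ∧ σ (σ i) = i) →
    ∃ f : ℕ → α, (∀ k, k < n → f k ∈ s) ∧
      (∀ k l, k < n → l < n → f k = f l → k = l) ∧
      ∀ j, 2 * j < n → 2 * j + 1 < n ∧ f (2 * j + 1) = σ (f (2 * j)) := by
  intro n
  induction n using Nat.strong_induction_on with
  | _ n ih =>
    intro s hs h
    rcases s.eq_empty_or_nonempty with rfl | ⟨i, hi⟩
    · refine ⟨fun _ => a0, ?_, ?_, ?_⟩ <;> simp at hs <;> subst hs <;> simp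
    · obtain ⟨h1, h2, h3⟩ := h i hi
      obtain ⟨s', hs'⟩ : ∃ s', s' = (s.erase i).erase (σ i) := ⟨_, rfl⟩
      have hm : σ i ∈ s.erase i := Finset.mem_erase.2 ⟨h2, h1⟩
      have hc : s'.card + 2 = n := by
        have e1 := Finset.card_erase_add_one hi
        have e2 := Finset.card_erase_add_one hm
        rw [hs']; omega
      have hm' : ∀ k, k ∈ s' ↔ k ≠ σ i ∧ k ≠ i ∧ k ∈ s := by
        intro k; simp [hs']
      obtain ⟨f, f1, f2, f3⟩ := ih s'.card (by omega) s' rfl (by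
        intro k hk
        obtain ⟨ha, hb, hk⟩ := (hm' k).1 hk
        obtain ⟨g1, g2, g3⟩ := h k hk
        refine ⟨(hm' _).2 ⟨?_, ?_, g1⟩, g2, g3⟩
        · intro he; exact hb (by rw [← g3, he, h3])
        · intro he; exact ha (by rw [← g3, he]))
      refine ⟨fun k => match k with | 0 => i | 1 => σ i | (m+2) => f m, ?_, ?_, ?_⟩
      · intro k hk
        match k with
        | 0 => exact hi
        | 1 => exact h1
        | m+2 => exact ((hm' _).1 (f1 m (by omega))).2.2
      · intro k l hk hl
        match k, l with
        | 0, 0 => intro _; rfl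
        | 0, 1 => intro he; exact absurd he.symm h2
        | 1, 0 => intro he; exact absurd he h2
        | 1, 1 => intro _; rfl
        | 0, m+2 => intro he; exact absurd he.symm ((hm' _).1 (f1 m (by omega))).2.1
        | 1, m+2 => intro he; exact absurd he.symm ((hm' _).1 (f1 m (by omega))).1
        | m+2, 0 => intro he; exact absurd he ((hm' _).1 (f1 m (by omega))).2.1
        | m+2, 1 => intro he; exact absurd he ((hm' _).1 (f1 m (by omega))).1
        | m+2, m'+2 =>
          intro he
          have := f2 m m' (by omega) (by omega) he
          omega
      · intro j hj
        match j with
        | 0 => exact ⟨by omega, rfl⟩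
        | j+1 =>
          obtain ⟨g1, g2⟩ := f3 j (by omega)
          exact ⟨by omega, g2⟩

lemma isLP_add {x y : Fin d → ℝ} (hx : IsLP x) (hy : IsLP y) : IsLP (x + y) := by
  intro i
  obtain ⟨m, hm⟩ := hx i
  obtain ⟨n, hn⟩ := hy i
  exact ⟨m + n, by simp [hm, hn]⟩

lemma isLP_sub' {x y : Fin d → ℝ} (hx : IsLP x) (hy : IsLP y) : IsLP (x - y) := by
  intro i
  obtain ⟨m, hm⟩ := hx i
  obtain ⟨n, hn⟩ := hy i
  exact ⟨m - n, by simp [hm, hn]⟩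

lemma split_of (hd : 2 ≤ d) (Q : Set (Fin 2 → ℤ)) (β : ℕ → Fin d → ℝ)
    (c : ℕ → (Fin d → ℝ) →ₗ[ℝ] ℝ)
    (dual : ∀ m n, m < d → n < d → c m (β n) = if m = n then 1 else 0)
    (hβ : ∀ n, n < d → IsLP (β n))
    (hc : ∀ n, n < d → ∀ x, IsLP x → ∃ z : ℤ, c n x = z)
    (hV : ∀ w, w ∈ V ↔ (∃ v ∈ Q, w = (v 0 : ℝ) • β 0 + (v 1 : ℝ) • β 1) ∨
      ∃ j, j < (d - 2) / 2 ∧ ∃ v ∈ V2v,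
        w = (v 0 : ℝ) • β (2 * j + 2) + (v 1 : ℝ) • β (2 * j + 2 + 1)) :
    ∃ φ : (Fin d → ℝ) ≃ₗ[ℝ] (Fin d → ℝ), Unimodular φ ∧
      φ '' convexHull ℝ (V : Set (Fin d → ℝ)) = splitModel2 d Q := by
  let φ0 : (Fin d → ℝ) →ₗ[ℝ] (Fin d → ℝ) := LinearMap.pi (fun i => c i)
  have hφβ : ∀ i : Fin d, φ0 (β i) = Pi.single i 1 := by
    intro i
    ext k
    simp only [φ0, LinearMap.pi_apply]
    rw [dual k i k.2 i.2, Pi.single_apply]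
    simp only [Fin.ext_iff]
  have hsum : ∀ y : Fin d → ℝ, φ0 (∑ i, y i • β i) = y := by
    intro y
    rw [map_sum]
    simp only [map_smul, hφβ]
    ext k
    simp [Finset.sum_apply, Pi.single_apply]
  have hsurj : Function.Surjective φ0 := fun y => ⟨_, hsum y⟩
  have hinj : Function.Injective φ0 := LinearMap.injective_iff_surjective.2 hsurj
  let φ := LinearEquiv.ofBijective φ0 ⟨hinj, hsurj⟩
  have hφ : ∀ x, φ x = φ0 x := fun x => rfl
  have hemb : ∀ o, o + 1 < d → ∀ v : Fin 2 → ℤ,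
      φ0 ((v 0 : ℝ) • β o + (v 1 : ℝ) • β (o + 1)) = embed2 d o v := by
    intro o ho v
    ext k
    simp only [φ0, LinearMap.pi_apply, map_add, map_smul, smul_eq_mul, embed2]
    rw [dual k o k.2 (by omega), dual k (o+1) k.2 ho]
    by_cases h1 : (k : ℕ) = o
    · simp [h1]
    · by_cases h2 : (k : ℕ) = o + 1
      · simp [h2]
      · simp [h1, h2]
  refine ⟨φ, ?_, ?_⟩
  · intro x
    constructor
    · intro hx i
      exact hc i i.2 x hx
    · intro hx
      have : x = ∑ i, (φ0 x) i • β i := hinj (by rw [hsum])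
      rw [this]
      intro k
      choose z hz using hx
      choose t ht using (fun i : Fin d => hβ i i.2 k)
      refine ⟨∑ i, z i * t i, ?_⟩
      push_cast
      rw [Finset.sum_apply]
      refine Finset.sum_congr rfl fun i _ => ?_
      rw [Pi.smul_apply, smul_eq_mul, ht, ← hφ, hz]
  · have := LinearMap.image_convexHull φ0 (V : Set (Fin d → ℝ))
    change φ0 '' _ = _
    rw [this, splitModel2]
    congr 1
    ext y
    simp only [Set.mem_image, Set.mem_union, Set.mem_iUnion, Finset.mem_range, Finset.mem_coe]
    constructor
    · rintro ⟨w, hw, rfl⟩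
      rcases (hV w).1 hw with ⟨v, hv, rfl⟩ | ⟨j, hj, v, hv, rfl⟩
      · left; exact ⟨v, hv, (hemb 0 (by omega) v).symm⟩
      · right; exact ⟨j, hj, v, hv, (hemb _ (by omega) v).symm⟩
    · rintro (⟨v, hv, rfl⟩ | ⟨j, hj, v, hv, rfl⟩)
      · exact ⟨_, (hV _).2 (Or.inl ⟨v, hv, rfl⟩), hemb 0 (by omega) v⟩
      · exact ⟨_, (hV _).2 (Or.inr ⟨j, hj, v, hv, rfl⟩), hemb _ (by omega) v⟩

lemma V2v_iff {x y w : Fin d → ℝ} : (∃ v ∈ V2v, w = (v 0 : ℝ) • x + (v 1 : ℝ) • (y - x)) ↔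
    w = x ∨ w = - x ∨ w = y ∨ w = - y ∨ w = y - x ∨ w = x - y := by
  simp only [V2v, Set.mem_insert_iff, Set.mem_singleton_iff, exists_eq_or_imp, exists_eq_left]
  simp
  have : -x + (x - y) = - y := by abel
  rw [this]
  tauto

lemma out_split (hd : 2 ≤ d) {p q : Fin d} {L : Set (Fin d → ℝ)} (o : Out V b p q L)
    (hde : Even d)
    (Q : Set (Fin 2 → ℤ)) (β0 β1 : Fin d → ℝ) (c0 c1 : (Fin d → ℝ) →ₗ[ℝ] ℝ)
    (h00 : c0 β0 = 1) (h01 : c0 β1 = 0) (h10 : c1 β0 = 0) (h11 : c1 β1 = 1)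
    (z0 : ∀ i, i ≠ p → i ≠ q → c0 (b i) = 0) (z1 : ∀ i, i ≠ p → i ≠ q → c1 (b i) = 0)
    (y0 : ∀ i, i ≠ p → i ≠ q → b.coord i β0 = 0) (y1 : ∀ i, i ≠ p → i ≠ q → b.coord i β1 = 0)
    (l0 : IsLP β0) (l1 : IsLP β1)
    (i0 : ∀ x, IsLP x → ∃ z : ℤ, c0 x = z) (i1 : ∀ x, IsLP x → ∃ z : ℤ, c1 x = z)
    (hL : ∀ w, w ∈ L ↔ ∃ v ∈ Q, w = (v 0 : ℝ) • β0 + (v 1 : ℝ) • β1) :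
    ∃ φ : (Fin d → ℝ) ≃ₗ[ℝ] (Fin d → ℝ), Unimodular φ ∧
      φ '' convexHull ℝ (V : Set (Fin d → ℝ)) = splitModel2 d Q := by
  classical
  let s : Finset (Fin d) := (Finset.univ.erase p).erase q
  have hs : ∀ i, i ∈ s ↔ i ≠ p ∧ i ≠ q := by intro i; simp [s, and_comm]
  have hsc : s.card = d - 2 := by
    have h1 := Finset.card_erase_add_one (Finset.mem_univ p)
    have h2 := Finset.card_erase_add_one (s := Finset.univ.erase p) (a := q)
      (by simp [o.ne.symm])
    simp only [Finset.card_univ, Fintype.card_fin] at h1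
    change (Finset.erase _ q).card = _
    omega
  have hex : ∀ i, ∃ a, i ≠ p → i ≠ q → a ≠ i ∧ a ≠ p ∧ a ≠ q ∧ nv V b i = b a - b i ∧
      nv V b a = b i - b a := by
    intro i
    by_cases h1 : i = p
    · exact ⟨i, fun h => absurd h1 h⟩
    by_cases h2 : i = q
    · exact ⟨i, fun _ h => absurd h2 h⟩
    obtain ⟨a, ha⟩ := o.hex i h1 h2
    exact ⟨a, fun _ _ => ha⟩
  choose σ hσ using hex
  obtain ⟨f, f1, f2, f3⟩ := pairing p σ (d - 2) s hsc (by
    intro i hi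
    obtain ⟨h1, h2⟩ := (hs i).1 hi
    obtain ⟨g1, g2, g3, g4, g5⟩ := hσ i h1 h2
    refine ⟨(hs _).2 ⟨g2, g3⟩, g1, ?_⟩
    obtain ⟨k1, k2, k3, k4, k5⟩ := hσ (σ i) g2 g3
    rw [g5] at k4
    exact b.injective (by simpa using k4.symm))
  have fp : ∀ k, k < d - 2 → f k ≠ p := fun k hk => ((hs _).1 (f1 k hk)).1
  have fq : ∀ k, k < d - 2 → f k ≠ q := fun k hk => ((hs _).1 (f1 k hk)).2
  have fsurj : ∀ i, i ≠ p → i ≠ q → ∃ k, k < d - 2 ∧ f k = i := by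
    intro i h1 h2
    have him : (Finset.range (d - 2)).image f = s := by
      apply Finset.eq_of_subset_of_card_le
      · intro x hx
        simp only [Finset.mem_image, Finset.mem_range] at hx
        obtain ⟨k, hk, rfl⟩ := hx
        exact f1 k hk
      · rw [hsc, Finset.card_image_of_injOn, Finset.card_range]
        intro k hk l hl he
        simp only [Finset.coe_range, Set.mem_Iio] at hk hl
        exact f2 k l hk hl he
    have := (hs i).2 ⟨h1, h2⟩
    rw [← him] at this
    simpa using this
  have fe : ∀ k l, k < d - 2 → l < d - 2 →
      b.coord (f k) (b (f l)) = if k = l then (1 : ℝ) else 0 := by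
    intro k l hk hl
    rw [bc]
    by_cases h : k = l
    · subst h; simp
    · rw [if_neg h, if_neg (fun he => h (f2 k l hk hl he.symm))]
  have hev : (d - 2) % 2 = 0 := by
    obtain ⟨t, ht⟩ := hde; omega
  have hbl : ∀ i, IsLP (b i) := fun i => o.ff.H.lat _ (o.ff.F.mem i)
  let β : ℕ → Fin d → ℝ := fun n => match n with
    | 0 => β0
    | 1 => β1
    | m+2 => if m % 2 = 0 then b (f m) else b (f m) - b (f (m - 1))
  let c : ℕ → (Fin d → ℝ) →ₗ[ℝ] ℝ := fun n => match n with
    | 0 => c0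
    | 1 => c1
    | m+2 => if m % 2 = 0 then b.coord (f m) + b.coord (f (m + 1)) else b.coord (f m)
  refine split_of hd Q β c ?_ ?_ ?_ ?_
  · intro m n hm hn
    match m, n with
    | 0, 0 => simpa [c, β] using h00
    | 0, 1 => simpa [c, β] using h01
    | 1, 0 => simpa [c, β] using h10
    | 1, 1 => simpa [c, β] using h11
    | 0, k+2 =>
      have e1 := z0 _ (fp k (by omega)) (fq k (by omega))
      have e2 := z0 _ (fp (k-1) (by omega)) (fq (k-1) (by omega))
      rw [if_neg (by omega)]
      simp only [β]
      split_ifs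
      · exact e1
      · rw [map_sub]; exact (by rw [e1, e2, sub_zero])
    | 1, k+2 =>
      have e1 := z1 _ (fp k (by omega)) (fq k (by omega))
      have e2 := z1 _ (fp (k-1) (by omega)) (fq (k-1) (by omega))
      rw [if_neg (by omega)]
      simp only [β]
      split_ifs
      · exact e1
      · rw [map_sub]; exact (by rw [e1, e2, sub_zero])
    | k+2, 0 =>
      have e1 := y0 _ (fp k (by omega)) (fq k (by omega))
      rw [if_neg (by omega)]
      simp only [c]
      split_ifs
      · have e2 := y0 _ (fp (k+1) (by omega)) (fq (k+1) (by omega))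
        rw [LinearMap.add_apply]; exact (by rw [e1, e2, add_zero])
      · exact e1
    | k+2, 1 =>
      have e1 := y1 _ (fp k (by omega)) (fq k (by omega))
      rw [if_neg (by omega)]
      simp only [c]
      split_ifs
      · have e2 := y1 _ (fp (k+1) (by omega)) (fq (k+1) (by omega))
        rw [LinearMap.add_apply]; exact (by rw [e1, e2, add_zero])
      · exact e1
    | k+2, l+2 =>
      simp only [c, β]
      by_cases hk : k % 2 = 0 <;> by_cases hl : l % 2 = 0
      · rw [if_pos hk, if_pos hl, LinearMap.add_apply, fe _ _ (by omega) (by omega),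
          fe _ _ (by omega) (by omega)]
        by_cases h : k = l
        · subst h; simp
        · rw [if_neg (by omega), if_neg (by omega), if_neg (by omega), add_zero]
      · rw [if_pos hk, if_neg hl, LinearMap.add_apply, map_sub, map_sub,
          fe _ _ (by omega) (by omega), fe _ _ (by omega) (by omega),
          fe _ _ (by omega) (by omega), fe _ _ (by omega) (by omega)]
        by_cases h : l = k + 1
        · subst h; simp
        · rw [if_neg (by omega), if_neg (by omega), if_neg (by omega), if_neg (by omega),
            if_neg (by omega)]
          simp
      · rw [if_neg hk, if_pos hl, fe _ _ (by omega) (by omega), if_neg (by omega),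
          if_neg (by omega)]
      · rw [if_neg hk, if_neg hl, map_sub, fe _ _ (by omega) (by omega),
          fe _ _ (by omega) (by omega)]
        by_cases h : k = l
        · subst h; rw [if_pos rfl, if_neg (by omega), if_pos rfl, sub_zero]
        · rw [if_neg (by omega), if_neg (by omega), if_neg (by omega), sub_zero]
  · intro n hn
    match n with
    | 0 => exact l0
    | 1 => exact l1
    | k+2 =>
      simp only [β]
      split_ifs
      · exact hbl _
      · exact isLP_sub' (hbl _) (hbl _)
  · intro n hn x hx
    match n with
    | 0 => exact i0 x hx
    | 1 => exact i1 x hx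
    | k+2 =>
      obtain ⟨m, hm⟩ := o.int _ (fp k (by omega)) (fq k (by omega)) x hx
      simp only [c]
      split_ifs
      · obtain ⟨n, hn⟩ := o.int _ (fp (k+1) (by omega)) (fq (k+1) (by omega)) x hx
        exact ⟨m + n, by rw [LinearMap.add_apply, hm, hn]; push_cast; rfl⟩
      · exact ⟨m, hm⟩
  · have hβe : ∀ j, β (2 * j + 2) = b (f (2 * j)) := by
      intro j; simp only [β]; rw [if_pos (by omega)]
    have hβo : ∀ j, β (2 * j + 2 + 1) = b (f (2 * j + 1)) - b (f (2 * j)) := by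
      intro j
      change (if (2 * j + 1) % 2 = 0 then _ else _) = _
      rw [if_neg (by omega)]; rfl
    intro w
    rw [o.mem, hL]
    apply or_congr Iff.rfl
    have hx : ∀ j, 2 * j < d - 2 → nv V b (f (2 * j)) = b (f (2 * j + 1)) - b (f (2 * j)) ∧
        nv V b (f (2 * j + 1)) = b (f (2 * j)) - b (f (2 * j + 1)) := by
      intro j hj
      obtain ⟨g1, g2, g3, g4, g5⟩ := hσ _ (fp _ hj) (fq _ hj)
      rw [← (f3 j hj).2] at g4 g5
      exact ⟨g4, g5⟩
    simp only [hβe, hβo, V2v_iff]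
    constructor
    · rintro ⟨i, h1, h2, h⟩
      obtain ⟨k, hk, rfl⟩ := fsurj i h1 h2
      rcases Nat.even_or_odd' k with ⟨j, rfl | rfl⟩
      · refine ⟨j, by omega, ?_⟩
        rw [(hx j hk).1] at h
        tauto
      · refine ⟨j, by omega, ?_⟩
        rw [(hx j (by omega)).2] at h
        tauto
    · rintro ⟨j, hj, h⟩
      have hj1 : 2 * j < d - 2 := by omega
      have hj2 : 2 * j + 1 < d - 2 := by omega
      have A : (w = b (f (2*j)) ∨ w = - b (f (2*j)) ∨ w = nv V b (f (2*j))) ∨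
          (w = b (f (2*j+1)) ∨ w = - b (f (2*j+1)) ∨ w = nv V b (f (2*j+1))) := by
        rw [(hx j hj1).1, (hx j hj1).2]; tauto
      rcases A with A | A
      · exact ⟨_, fp _ hj1, fq _ hj1, A⟩
      · exact ⟨_, fp _ hj2, fq _ hj2, A⟩

lemma Out.sum_int {p q : Fin d} {L : Set (Fin d → ℝ)} (o : Out V b p q L) {x : Fin d → ℝ}
    (hx : IsLP x) : ∃ n : ℤ, b.coord p x + b.coord q x = n := by
  classical
  obtain ⟨m, hm⟩ := o.ff.F.int x hx
  rw [lev_apply, ← Finset.add_sum_erase _ _ (Finset.mem_univ p),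
    ← Finset.add_sum_erase _ _ (show q ∈ Finset.univ.erase p by simp [o.ne.symm])] at hm
  have : ∃ n : ℤ, ∑ i ∈ (Finset.univ.erase p).erase q, b.coord i x = n := by
    have h : ∀ i, ∃ n : ℤ, i ∈ (Finset.univ.erase p).erase q → b.coord i x = n := by
      intro i
      by_cases hi : i ∈ (Finset.univ.erase p).erase q
      · simp only [Finset.mem_erase, Finset.mem_univ, and_true] at hi
        obtain ⟨n, hn⟩ := o.int i hi.2 hi.1 x hx
        exact ⟨n, fun _ => hn⟩
      · exact ⟨0, fun h => absurd h hi⟩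
    choose n hn using h
    refine ⟨∑ i ∈ (Finset.univ.erase p).erase q, n i, ?_⟩
    push_cast
    exact Finset.sum_congr rfl hn
  obtain ⟨n, hn⟩ := this
  exact ⟨m - n, by rw [hn] at hm; push_cast; linarith⟩

theorem comb_split (hd : 2 ≤ d) (hde : Even d) (H : Hyp V) :
    ∃ φ : (Fin d → ℝ) ≃ₗ[ℝ] (Fin d → ℝ), Unimodular φ ∧
      (φ '' convexHull ℝ (V : Set (Fin d → ℝ)) = splitModel2 d tV2v ∨
       φ '' convexHull ℝ (V : Set (Fin d → ℝ)) = splitModel2 d E1v ∨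
       φ '' convexHull ℝ (V : Set (Fin d → ℝ)) = splitModel2 d E2v) := by
  obtain ⟨b, p, q, ⟨hk, o⟩ | ⟨hkp, hk, o⟩ | ⟨hk, o⟩⟩ := main_comb hde H
  · have hne := o.ne
    have hbl : ∀ i, IsLP (b i) := fun i => o.ff.H.lat _ (o.ff.F.mem i)
    have hq : ∀ x, IsLP x → ∃ z : ℤ, b.coord q x = z := by
      intro x hx
      obtain ⟨n, hn⟩ := kk_int o.ff q hx
      rw [hk] at hn
      exact ⟨n, by simpa using hn⟩
    obtain ⟨φ, h1, h2⟩ := out_split hd o hde tV2v (b q) (b p - b q) (b.coord p + b.coord q)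
      (b.coord p) (by simp [hne, hne.symm]) (by simp [hne, hne.symm])
      (by simp [hne, hne.symm]) (by simp [hne, hne.symm])
      (by intro i h1 h2; simp [h1, h2]) (by intro i h1 h2; simp [h1, h2])
      (by intro i h1 h2; simp [h1.symm, h2.symm])
      (by intro i h1 h2; simp [h1.symm, h2.symm])
      (hbl _) (isLP_sub' (hbl _) (hbl _))
      (fun x hx => o.sum_int hx)
      (by
        intro x hx
        obtain ⟨n, hn⟩ := o.sum_int hx
        obtain ⟨m, hm⟩ := hq x hx
        exact ⟨n - m, by push_cast; linarith⟩)
      (by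
        intro w
        simp only [tV2v, Set.mem_insert_iff, Set.mem_singleton_iff, exists_eq_or_imp,
          exists_eq_left]
        simp
        tauto)
    exact ⟨φ, h1, Or.inl h2⟩
  · have hne := o.ne
    have hbl : ∀ i, IsLP (b i) := fun i => o.ff.H.lat _ (o.ff.F.mem i)
    have hq : ∀ x, IsLP x → ∃ z : ℤ, 2 * b.coord q x = z := by
      intro x hx
      obtain ⟨n, hn⟩ := kk_int o.ff q hx
      rw [hk] at hn
      exact ⟨n, by simpa using hn⟩
    have hm : (-1/2 : ℝ) • (b p + b q) ∈ V := (o.mem _).2 (Or.inl (by simp))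
    have hm' : IsLP ((1/2 : ℝ) • (b p + b q)) := by
      have := isLP_neg (o.ff.H.lat _ hm)
      convert this using 1
      rw [← neg_smul]; norm_num
    obtain ⟨φ, h1, h2⟩ := out_split hd o hde E1v (b p) ((1/2 : ℝ) • (b p + b q))
      (b.coord p - b.coord q)
      ((2 : ℝ) • b.coord q) (by simp [hne, hne.symm]) (by simp [hne, hne.symm])
      (by simp [hne, hne.symm]) (by simp [hne, hne.symm])
      (by intro i h1 h2; simp [h1, h2]) (by intro i h1 h2; simp [h1, h2])
      (by intro i h1 h2; simp [h1.symm, h2.symm])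
      (by intro i h1 h2; simp [h1.symm, h2.symm])
      (hbl _) hm'
      (by
        intro x hx
        obtain ⟨n, hn⟩ := o.sum_int hx
        obtain ⟨m, hm⟩ := hq x hx
        exact ⟨n - m, by push_cast; rw [LinearMap.sub_apply]; linarith⟩)
      (by
        intro x hx
        obtain ⟨m, hm⟩ := hq x hx
        exact ⟨m, by rw [LinearMap.smul_apply, smul_eq_mul]; exact hm⟩)
      (by
        intro w
        simp only [E1v, Set.mem_insert_iff, Set.mem_singleton_iff, exists_eq_or_imp,
          exists_eq_left]
        have e1 : (((![1, 0] : Fin 2 → ℤ) 0 : ℤ) : ℝ) • b p + (((![1, 0] : Fin 2 → ℤ) 1 : ℤ) : ℝ) •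
          (1/2 : ℝ) • (b p + b q) = b p := by simp
        have e2 : (((![-1, 2] : Fin 2 → ℤ) 0 : ℤ) : ℝ) • b p +
          (((![-1, 2] : Fin 2 → ℤ) 1 : ℤ) : ℝ) • (1/2 : ℝ) • (b p + b q) = b q := by
          simp
        have e3 : (((![-1, 1] : Fin 2 → ℤ) 0 : ℤ) : ℝ) • b p +
          (((![-1, 1] : Fin 2 → ℤ) 1 : ℤ) : ℝ) • (1/2 : ℝ) • (b p + b q) =
            (1/2 : ℝ) • (b q - b p) := by
          simp; module
        have e4 : (((![0, -1] : Fin 2 → ℤ) 0 : ℤ) : ℝ) • b p +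
          (((![0, -1] : Fin 2 → ℤ) 1 : ℤ) : ℝ) • (1/2 : ℝ) • (b p + b q) =
            (-1/2 : ℝ) • (b p + b q) := by
          simp; module
        have e5 : (((![1, -1] : Fin 2 → ℤ) 0 : ℤ) : ℝ) • b p +
          (((![1, -1] : Fin 2 → ℤ) 1 : ℤ) : ℝ) • (1/2 : ℝ) • (b p + b q) =
            (1/2 : ℝ) • (b p - b q) := by
          simp; module
        rw [e1, e2, e3, e4, e5]
        tauto)
    exact ⟨φ, h1, Or.inr (Or.inl h2)⟩
  · have hne := o.ne
    have hbl : ∀ i, IsLP (b i) := fun i => o.ff.H.lat _ (o.ff.F.mem i)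
    have hq : ∀ x, IsLP x → ∃ z : ℤ, b.coord q x = z := by
      intro x hx
      obtain ⟨n, hn⟩ := kk_int o.ff q hx
      rw [hk] at hn
      exact ⟨n, by simpa using hn⟩
    obtain ⟨φ, h1, h2⟩ := out_split hd o hde E2v (b p) (b q) (b.coord p)
      (b.coord q) (by simp) (by simp [hne.symm])
      (by simp [hne]) (by simp)
      (by intro i h1 h2; simp [h1]) (by intro i h1 h2; simp [h2])
      (by intro i h1 h2; simp [h1.symm])
      (by intro i h1 h2; simp [h2.symm])
      (hbl _) (hbl _)
      (by
        intro x hx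
        obtain ⟨n, hn⟩ := o.sum_int hx
        obtain ⟨m, hm⟩ := hq x hx
        exact ⟨n - m, by push_cast; linarith⟩)
      hq
      (by
        intro w
        simp only [E2v, Set.mem_insert_iff, Set.mem_singleton_iff, exists_eq_or_imp,
          exists_eq_left]
        simp
        simp only [sub_eq_add_neg, add_comm]
        tauto)
    exact ⟨φ, h1, Or.inr (Or.inr h2)⟩

end split

section geom
variable {d : ℕ}

/-- the linear functional given by the standard inner product with `x` -/
def dotL (x : Fin d → ℝ) : (Fin d → ℝ) →ₗ[ℝ] ℝ where
  toFun y := dotp x y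
  map_add' y z := by simp [dotp, mul_add, Finset.sum_add_distrib]
  map_smul' c y := by
    simp only [dotp, Finset.mul_sum, Pi.smul_apply, smul_eq_mul, RingHom.id_apply]
    exact Finset.sum_congr rfl fun i _ => by ring

lemma dotL_apply (x y : Fin d → ℝ) : dotL x y = dotp x y := rfl

lemma dotp_single (x : Fin d → ℝ) (i : Fin d) : dotp x (Pi.single i 1) = x i := by
  simp [dotp, Pi.single_apply]

lemma exists_dotL (u : (Fin d → ℝ) →ₗ[ℝ] ℝ) : ∃ x : Fin d → ℝ, u = dotL x := by
  refine ⟨fun i => u (Pi.single i 1), ?_⟩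
  apply LinearMap.pi_ext'
  intro i
  ext
  simp [dotL_apply, dotp_single]

lemma dotL_inj {x y : Fin d → ℝ} (h : dotL x = dotL y) : x = y := by
  ext i
  rw [← dotp_single x, ← dotp_single y, ← dotL_apply, h, dotL_apply]

lemma dotp_comb (a c : ℝ) (x y w : Fin d → ℝ) :
    dotp (a • x + c • y) w = a * dotp x w + c * dotp y w := by
  simp only [dotp, Finset.mul_sum, ← Finset.sum_add_distrib, Pi.add_apply, Pi.smul_apply,
    smul_eq_mul]
  exact Finset.sum_congr rfl fun i _ => by ring

lemma comb_eq_one {a c s t : ℝ} (ha : 0 < a) (hc : 0 < c) (hac : a + c = 1) (hs : s ≤ 1)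
    (ht : t ≤ 1) (h : a * s + c * t = 1) : s = 1 := by
  have h1 : c * t ≤ c * 1 := mul_le_mul_of_nonneg_left ht hc.le
  have h2 : a * 1 ≤ a * s := by linarith
  have := le_of_mul_le_mul_left h2 ha
  linarith

lemma small_mem {P : Set (Fin d → ℝ)} (h : (0 : Fin d → ℝ) ∈ interior P) (x : Fin d → ℝ) :
    ∃ t : ℝ, 0 < t ∧ t • x ∈ P ∧ (-t) • x ∈ P := by
  rw [mem_interior_iff_mem_nhds, Metric.mem_nhds_iff] at h
  obtain ⟨r, hr, hP⟩ := h
  have hn : 0 < ‖x‖ + 1 := by positivity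
  have ht : 0 < r / (‖x‖ + 1) := by positivity
  have hlt : r / (‖x‖ + 1) * ‖x‖ < r := by
    rw [div_mul_eq_mul_div, div_lt_iff₀ hn]
    nlinarith
  refine ⟨r / (‖x‖ + 1), ht, hP ?_, hP ?_⟩
  · rw [mem_ball_zero_iff, norm_smul, Real.norm_of_nonneg ht.le]; exact hlt
  · rw [mem_ball_zero_iff, norm_smul, norm_neg, Real.norm_of_nonneg ht.le]; exact hlt

lemma isLP_dot {x y : Fin d → ℝ} (hx : IsLP x) (hy : IsLP y) : ∃ n : ℤ, dotp x y = n := by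
  choose m hm using hx
  choose n hn using hy
  refine ⟨∑ i, m i * n i, ?_⟩
  push_cast
  exact Finset.sum_congr rfl fun i _ => by rw [hm, hn]

lemma finrank_facet (hd : 1 ≤ d) {F T : Set (Fin d → ℝ)} (u : (Fin d → ℝ) →ₗ[ℝ] ℝ) (hTF : T ⊆ F)
    (hF : ∀ y ∈ F, u y = 1) (hT : Submodule.span ℝ T = ⊤) :
    F.Nonempty ∧ Module.finrank ℝ (vectorSpan ℝ F) = d - 1 := by
  have hne : T.Nonempty := by
    rw [Set.nonempty_iff_ne_empty]
    rintro rfl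
    rw [Submodule.span_empty] at hT
    have := congrArg (fun S : Submodule ℝ (Fin d → ℝ) => Module.finrank ℝ S) hT
    simp at this
    omega
  obtain ⟨t, ht⟩ := hne
  refine ⟨⟨t, hTF ht⟩, ?_⟩
  have hker : vectorSpan ℝ F = LinearMap.ker u := by
    apply le_antisymm
    · rw [vectorSpan_def, Submodule.span_le]
      rintro _ ⟨x, hx, y, hy, rfl⟩
      simp [hF x hx, hF y hy]
    · intro x hx
      rw [LinearMap.mem_ker] at hx
      have hsup : (⊤ : Submodule ℝ (Fin d → ℝ)) ≤ vectorSpan ℝ F ⊔ Submodule.span ℝ {t} := by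
        rw [← hT, Submodule.span_le]
        intro w hw
        have : w = (w - t) + t := by abel
        rw [this]
        refine Submodule.add_mem_sup ?_ (Submodule.mem_span_singleton_self t)
        exact vsub_mem_vectorSpan ℝ (hTF hw) (hTF ht)
      have hx' := hsup (Submodule.mem_top : x ∈ _)
      obtain ⟨v, hv, y, hy, rfl⟩ := Submodule.mem_sup.1 hx'
      obtain ⟨c, rfl⟩ := Submodule.mem_span_singleton.1 hy
      have huv : u v = 0 := by
        have : vectorSpan ℝ F ≤ LinearMap.ker u := by
          rw [vectorSpan_def, Submodule.span_le]
          rintro _ ⟨x, hx, y, hy, rfl⟩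
          simp [hF x hx, hF y hy]
        exact this hv
      rw [map_add, map_smul, huv, hF t (hTF ht)] at hx
      have : c = 0 := by simpa using hx
      rw [this, zero_smul, add_zero]
      exact hv
  rw [hker]
  have hsurj : Function.Surjective u := by
    intro c
    exact ⟨c • t, by rw [map_smul, hF t (hTF ht)]; simp⟩
  have h1 := LinearMap.finrank_range_add_finrank_ker u
  rw [LinearMap.range_eq_top.2 hsurj, finrank_top, Module.finrank_self, Module.finrank_fin_fun]
    at h1
  omega

theorem hyp_of {P : Set (Fin d → ℝ)} (hd : 1 ≤ d) (hP : IsReflexive P) (hs : IsSimplicial P)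
    (hcard : (Set.extremePoints ℝ P).ncard = 3 * d - 1) :
    ∃ V : Finset (Fin d → ℝ), Hyp V ∧ P = convexHull ℝ (V : Set (Fin d → ℝ)) := by
  obtain ⟨⟨G, hG, hPG⟩, h0, ⟨D, hD, hPD⟩⟩ := hP
  have hEG : Set.extremePoints ℝ P ⊆ (G : Set (Fin d → ℝ)) := by
    rw [hPG]; exact extremePoints_convexHull_subset
  have hfin : (Set.extremePoints ℝ P).Finite := G.finite_toSet.subset hEG
  have hconv : Convex ℝ P := by rw [hPG]; exact convex_convexHull ℝ _
  have hcomp : IsCompact P := by rw [hPG]; exact G.finite_toSet.isCompact_convexHull ℝ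
  have hKM := closure_convexHull_extremePoints hcomp hconv
  rw [(hfin.isClosed_convexHull ℝ).closure_eq] at hKM
  have hVc : ((hfin.toFinset : Finset (Fin d → ℝ)) : Set (Fin d → ℝ)) = Set.extremePoints ℝ P :=
    hfin.coe_toFinset
  have hPV : P = convexHull ℝ ((hfin.toFinset : Finset (Fin d → ℝ)) : Set (Fin d → ℝ)) := by
    rw [hVc, hKM]
  have hmem : ∀ w, w ∈ hfin.toFinset ↔ w ∈ Set.extremePoints ℝ P := fun w => hfin.mem_toFinset
  have hub : ∀ u : (Fin d → ℝ) →ₗ[ℝ] ℝ, ∀ c : ℝ, (∀ w ∈ hfin.toFinset, u w ≤ c) →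
      ∀ y ∈ P, u y ≤ c := by
    intro u c hu y hy
    have : convexHull ℝ ((hfin.toFinset : Finset (Fin d → ℝ)) : Set (Fin d → ℝ)) ⊆
        {y | u y ≤ c} := convexHull_min (fun w hw => hu w hw) (convex_halfSpace_le u.isLinear c)
    rw [← hPV] at this
    exact this hy
  refine ⟨hfin.toFinset, ⟨?_, ?_, ?_, ?_, ?_, ?_⟩, hPV⟩
  · intro w hw
    exact hG w (hEG ((hmem w).1 hw))
  · intro u hu hspan
    obtain ⟨x, rfl⟩ := exists_dotL u
    have hxP : ∀ y ∈ P, dotp x y ≤ 1 := hub (dotL x) 1 hu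
    have hxe : x ∈ Set.extremePoints ℝ (dualPolytope P) := by
      rw [mem_extremePoints_iff_left]
      refine ⟨hxP, ?_⟩
      rintro x1 h1 x2 h2 ⟨a, c, ha, hc, hac, rfl⟩
      apply dotL_inj
      apply LinearMap.ext_on hspan
      rintro w ⟨hw, hw1⟩
      have hwP : w ∈ P := ((hmem w).1 hw).1
      rw [hw1]
      rw [dotL_apply, dotp_comb] at hw1
      exact comb_eq_one ha hc hac (h1 w hwP) (h2 w hwP) hw1
    have hxl : IsLP x := by
      rw [hPD] at hxe
      exact hD x (extremePoints_convexHull_subset hxe)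
    refine ⟨fun y hy => isLP_dot hxl hy, ?_⟩
    have hFe : IsExtreme ℝ P {y ∈ P | dotp x y = 1} := by
      refine ⟨fun y hy => hy.1, ?_⟩
      rintro y1 h1 y2 h2 y ⟨hy, hy1⟩ ⟨a, c, ha, hc, hac, rfl⟩
      refine ⟨h1, ?_⟩
      rw [← dotL_apply, map_add, map_smul, map_smul, smul_eq_mul, smul_eq_mul] at hy1
      exact comb_eq_one ha hc hac (hxP y1 h1) (hxP y2 h2) hy1
    obtain ⟨hne, hfr⟩ := finrank_facet hd (F := {y ∈ P | dotp x y = 1}) (dotL x)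
      (fun w hw => ⟨((hmem w).1 hw.1).1, hw.2⟩) (fun y hy => hy.2) hspan
    have := hs _ ⟨x, hne, hxP, rfl, hfr⟩
    rw [hFe.extremePoints_eq] at this
    refine Eq.trans ?_ this
    congr 1
    ext w
    simp only [Set.mem_setOf_eq, Set.mem_inter_iff, hmem, dotL_apply]
    constructor
    · rintro ⟨h1, h2⟩; exact ⟨⟨h1.1, h2⟩, h1⟩
    · rintro ⟨⟨_, h2⟩, h1⟩; exact ⟨h1, h2⟩
  · intro l hl
    by_contra hcon
    push Not at hcon
    apply hl
    have hge : ∀ y ∈ P, 0 ≤ l y := by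
      intro y hy
      have := hub (-l) 0 (fun w hw => by simpa using hcon w hw) y hy
      simpa using this
    ext1 x
    obtain ⟨t, ht, h1, h2⟩ := small_mem h0 (Pi.single x 1)
    have e1 := hge _ h1
    have e2 := hge _ h2
    rw [map_smul, smul_eq_mul] at e1 e2
    have e3 : t * l (Pi.single x 1) = 0 := by linarith
    have e4 : l (Pi.single x 1) = 0 := by
      rcases mul_eq_zero.1 e3 with h | h
      · exact absurd h ht.ne'
      · exact h
    ext
    simpa using e4
  · rw [← Set.ncard_eq_toFinset_card _ hfin, hcard]; omega
  · rw [hmem]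
    intro h
    obtain ⟨t, ht, h1, h2⟩ := small_mem h0 (Pi.single (⟨0, hd⟩ : Fin d) 1)
    have := (mem_extremePoints_iff_left.1 h).2 _ h1 _ h2
      ⟨1/2, 1/2, by norm_num, by norm_num, by norm_num, by rw [neg_smul]; simp⟩
    have := congrFun this ⟨0, hd⟩
    simp at this
    exact ht.ne' this
  · intro w hw
    rw [← hPV]
    exact (hmem w).1 hw

end geom

/-- a `d`-dimensional simplicial reflexive polytope with `3d-1` vertices,
`d ≥ 4` even, splits into `(d-2)/2` copies of `V₂` and one copy of `Ṽ₂`, `E₁` or `E₂`. -/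
theorem stmt0 {d : ℕ} (hd : 4 ≤ d) (hde : Even d)
    (P : Set (Fin d → ℝ)) (hP : IsReflexive P) (hs : IsSimplicial P)
    (hcard : (Set.extremePoints ℝ P).ncard = 3 * d - 1) :
    ∃ φ : (Fin d → ℝ) ≃ₗ[ℝ] (Fin d → ℝ), Unimodular φ ∧
      (φ '' P = splitModel2 d tV2v ∨ φ '' P = splitModel2 d E1v ∨
        φ '' P = splitModel2 d E2v) := by
  obtain ⟨V, H, rfl⟩ := hyp_of (by omega) hP hs hcard
  exact comb_split (by omega) hde H
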